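/- arXiv:1606.01191 — 2 statements merged into one kernel-verified Lean document; each statement's English description precedes it below -/
import Mathlib

section
/- Let λ: λ_1 ≥ … ≥ λ_{r+1} be a non-increasing integer sequence (r ≥ 1) and let μ ∈ ℤ^{r+1} be such that λ majorizes μ. Let P be a near pattern with bounding sequence λ and weight μ, and let {π^{j,i} : 1 ≤ i ≤ j ≤ r} be an approximate partition overlay on P. Then the shift by k := □^prop(P) + Σ_{1 ≤ j ≤ r}(|π^{j,1}| + |π^{j,j}|) of the approximately overlaid near pattern (P, {π^{j,i}}) is a partition overlaid pattern (POP): i.e., in the shifted data every row interlaces the next and every partition π^{j,i} fits into the rectangle determined by the shifted rows. -/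
/-!
Write `x_i = λ^{j+1}_i - λ^j_i` and `y_h = λ^j_h - λ^{j+1}_{h+1}` for two consecutive rows. Near
interlacing says `x_i ≥ 0` for `i < j` and `y_h ≥ 0` for `h ≥ 2`; only `y_1` and `x_j` may be
negative. The shift by `k` adds `k` to exactly these two differences and leaves the others alone.
Since `|π|` bounds both the largest part and the number of parts of `π`, everything reduces to the
two inequalities `-y_1 ≤ □^prop(P)` and `-x_j ≤ □^prop(P)` for each `1 ≤ j ≤ r`
(`gap_first`, `gap_last`).

All terms of `□^prop` are non-negative, so for `1 ≤ b < j` the contribution of rows `j+1, j` is at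
least `u * v`, with `u = x_1 + … + x_b` and `v = y_{b+1} + … + y_j` (`mul_le_propTrap`). For
non-negative integers `min u v ≤ u * v`. Let `Δ_j` be the part of `□^prop` coming from the rows
with index at least `j`. Descending from the top row, the following three invariants hold.

* Domination with defect `Δ_j`: every sum of `b` of the weights `μ_1, …, μ_j`, `1 ≤ b < j`, is at
  most `λ^j_1 + … + λ^j_b + Δ_j`. At the top this is majorization. In passing from row `j+1` to
  row `j`, a set `B` of weights can be compared through `B` itself, at the cost `u`, or through
  `B ∪ {j+1}`, at the cost `v`; and `min u v` is covered by the area (`Dominates.descend`).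
* `λ^j_2 - λ^j_1 ≤ Δ_j` and `λ^j_j - λ^j_{j-1} ≤ Δ_j` for `j ≥ 3`.

Domination for the single weight `μ_{j+1}` gives `-y_1 ≤ Δ_{j+1} + (y_2 + … + y_j)`, which suffices
if `x_1 ≥ 1`; if `x_1 = 0` then `-y_1 = λ^{j+1}_2 - λ^{j+1}_1` and the second invariant applies.
The bound on `-x_j` is the mirror image, using the weights `μ_1, …, μ_j`.
-/

open Finset

/-- A partition: a non-increasing, eventually-zero sequence of naturals indexed from `1`
(the value at `0` is irrelevant; the convention `π₀ = ∞` is handled separately). -/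
def IsPartition (p : ℕ → ℕ) : Prop :=
  (∀ i, 1 ≤ i → p (i + 1) ≤ p i) ∧ ∃ N, ∀ i, N ≤ i → p i = 0

/-- The number of boxes `|π|` of a partition: the sum of its parts. -/
noncomputable def psize (p : ℕ → ℕ) : ℕ := ∑ᶠ i ∈ Set.Ici (1 : ℕ), p i

/-- The largest non-negative integer `a` such that `π_a ≥ a - c`
(with the convention `π₀ = ∞`, so `a = 0` is always admissible). -/
noncomputable def aOf (p : ℕ → ℕ) (c : ℤ) : ℕ :=
  sSup {a : ℕ | a = 0 ∨ (a : ℤ) - c ≤ (p a : ℤ)}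

/-- The partition `p` fits into the rectangle `(a, b)`: at most `a` parts, each ≤ `b`. -/
def FitsRect (p : ℕ → ℕ) (a b : ℤ) : Prop :=
  (∀ k : ℕ, a < (k : ℤ) → p k = 0) ∧ ∀ k : ℕ, 1 ≤ k → (p k : ℤ) ≤ b

/-- `x` (indexed by `1, …, n`) majorizes `y` (integer version): every `k`-element partial
sum of `y` is dominated by some `k`-element partial sum of `x` (equivalently, partial sums
of the non-increasing rearrangements are ordered), and the total sums agree. -/
def MajZ (n : ℕ) (x y : ℕ → ℤ) : Prop :=
  (∀ B : Finset ℕ, B ⊆ Finset.Icc 1 n →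
    ∃ A : Finset ℕ, A ⊆ Finset.Icc 1 n ∧ A.card = B.card ∧
      ∑ i ∈ B, y i ≤ ∑ i ∈ A, x i) ∧
  ∑ i ∈ Finset.Icc 1 n, x i = ∑ i ∈ Finset.Icc 1 n, y i

/-- `η'` (length `s`, with `η'_2 ≥ … ≥ η'_s`) nearly interlaces `η` (length `s + 1`):
no condition if `s = 1`; if `s ≥ 2` then `η_1 ≥ η'_1`, `η'_s ≥ η_{s+1}`, and
`(η'_2, …, η'_{s-1})` interlaces `(η_2, …, η_s)`. -/
def NearlyInterlaces (s : ℕ) (η η' : ℕ → ℤ) : Prop :=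
  (∀ i, 2 ≤ i → i + 1 ≤ s → η' (i + 1) ≤ η' i) ∧
  (2 ≤ s → η' 1 ≤ η 1 ∧ η (s + 1) ≤ η' s ∧
    ∀ i, 2 ≤ i → i + 1 ≤ s → η' i ≤ η i ∧ η (i + 1) ≤ η' i)

/-- The partitions `P 1, …, P s` approximately overlay the nearly interlacing pair
`η`, `η'`: no condition if `s = 1`; if `s ≥ 2` then `P 1` has at most `η 1 - η' 1` parts,
`P s` has largest part at most `η' s - η (s+1)`, and `P j` fits into the rectangle
`(η j - η' j, η' j - η (j+1))` for `2 ≤ j ≤ s - 1`. -/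
def ApproxOverlay (s : ℕ) (η η' : ℕ → ℤ) (P : ℕ → ℕ → ℕ) : Prop :=
  2 ≤ s →
    (∀ k : ℕ, η 1 - η' 1 < (k : ℤ) → P 1 k = 0) ∧
    (∀ k : ℕ, 1 ≤ k → (P s k : ℤ) ≤ η' s - η (s + 1)) ∧
    ∀ j, 2 ≤ j → j + 1 ≤ s → FitsRect (P j) (η j - η' j) (η' j - η (j + 1))

/-- The proper trapezoidal area `□^prop(η, η') = Σ_{1 ≤ i < j ≤ s} (η_i - η'_i)(η'_j - η_{j+1})`. -/
def propTrap (s : ℕ) (η η' : ℕ → ℤ) : ℤ :=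
  ∑ i ∈ Finset.Icc 1 s, ∑ j ∈ Finset.Icc (i + 1) s, (η i - η' i) * (η' j - η (j + 1))

/-- The sequence `a_j` of §3.1.2 of the paper, for the data `(μ, π)` and `η`:
`a_0 = 0` and `a_j = aOf π (μ - η_{j+1})` (the relevant `c_j` being `μ - η_{j+1}`). -/
noncomputable def Aseq (p : ℕ → ℕ) (η : ℕ → ℤ) (μ : ℤ) (j : ℕ) : ℕ :=
  if j = 0 then 0 else aOf p (μ - η (j + 1))

/-- The sequence `b_j = a_j - c_j`. -/
noncomputable def Bseq (p : ℕ → ℕ) (η : ℕ → ℤ) (μ : ℤ) (j : ℕ) : ℤ :=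
  (Aseq p η μ j : ℤ) - (μ - η (j + 1))

/-- The sequence `η'` produced by the map `ξ_η` applied to `(μ, π)`. -/
noncomputable def xiRow (s : ℕ) (η : ℕ → ℤ) (μ : ℤ) (p : ℕ → ℕ) (j : ℕ) : ℤ :=
  if s = 1 then (if j = 1 then η 1 + η 2 - μ else 0)
  else if j = s then η (s + 1) + Bseq p η μ (s - 1)
  else η j - ((Aseq p η μ j : ℤ) - (Aseq p η μ (j - 1) : ℤ))

/-- The partitions `π^1, …, π^s` produced by the map `ξ_η` applied to `(μ, π)`:
`xiParts s η μ p j` is the partition `π^j`, whose `k`-th part is `π_{a_{j-1}+k} - b_j`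
for `1 ≤ k ≤ a_j - a_{j-1}` (`1 ≤ j ≤ s - 1`), while `π^s` is `π_{a_{s-1}+1}, π_{a_{s-1}+2}, …`. -/
noncomputable def xiParts (s : ℕ) (η : ℕ → ℤ) (μ : ℤ) (p : ℕ → ℕ) (j k : ℕ) : ℕ :=
  if s = 1 then (if j = 1 then p k else 0)
  else if j = s then p (Aseq p η μ (s - 1) + k)
  else if 1 ≤ k ∧ k ≤ Aseq p η μ j - Aseq p η μ (j - 1) then
    p (Aseq p η μ (j - 1) + k) - (Bseq p η μ j).toNat
  else 0

/-- The shift by `k` of a sequence of length `s + 1`: the first entry increases by `2k`,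
entries `2, …, s` increase by `k`, the last entry is unchanged; for a sequence of
length `1` (i.e. `s = 0`) the single entry increases by `k`. -/
def shiftSeq (s : ℕ) (k : ℤ) (η : ℕ → ℤ) (j : ℕ) : ℤ :=
  if s = 0 then (if j = 1 then η 1 + k else η j)
  else if j = 1 then η 1 + 2 * k
  else if j ≤ s then η j + k
  else η j

/-- Sum of the entries of row `j` of an integer pattern. -/
def rowSumZ (L : ℕ → ℕ → ℤ) (j : ℕ) : ℤ := ∑ i ∈ Finset.Icc 1 j, L j i

/-- The (integer) pattern `L` of size `n` has weight `μ`. -/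
def HasWeightZ (n : ℕ) (L : ℕ → ℕ → ℤ) (μ : ℕ → ℤ) : Prop :=
  ∀ j, 1 ≤ j → j ≤ n → rowSumZ L j - rowSumZ L (j - 1) = μ j

/-- A near pattern: rows `L j` of length `j` (`1 ≤ j ≤ r + 1`), each row nearly
interlacing the next, with the top row non-increasing on indices `2, …, r`. -/
def IsNearPattern (r : ℕ) (L : ℕ → ℕ → ℤ) : Prop :=
  (∀ j, 1 ≤ j → j ≤ r → NearlyInterlaces j (L (j + 1)) (L j)) ∧
  (∀ i, 2 ≤ i → i + 1 ≤ r → L (r + 1) (i + 1) ≤ L (r + 1) i)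

/-- The proper trapezoidal area of a near pattern. -/
def patPropTrap (r : ℕ) (L : ℕ → ℕ → ℤ) : ℤ :=
  ∑ j ∈ Finset.Icc 2 r, propTrap j (L (j + 1)) (L j)

/-- `Q j i` (for `1 ≤ i ≤ j ≤ r`) is an approximate partition overlay on the
near pattern `L`. -/
def PatternOverlay (r : ℕ) (L : ℕ → ℕ → ℤ) (Q : ℕ → ℕ → ℕ → ℕ) : Prop :=
  (∀ j i, 1 ≤ i → i ≤ j → j ≤ r → IsPartition (Q j i)) ∧
  ∀ j, 1 ≤ j → j ≤ r → ApproxOverlay j (L (j + 1)) (L j) (Q j)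

/-! ### Partitions and their size -/

lemma psize_eq_sum (p : ℕ → ℕ) (hp : IsPartition p) :
    ∃ N, ∀ M, N ≤ M → psize p = ∑ i ∈ Finset.Icc 1 M, p i := by
  obtain ⟨-, N, hN⟩ := hp
  refine ⟨N, fun M hM => ?_⟩
  unfold psize
  rw [finsum_mem_eq_sum_of_inter_support_eq]
  ext i
  simp only [Set.mem_inter_iff, Set.mem_Ici, Function.mem_support, Finset.coe_Icc, Set.mem_Icc]
  constructor
  · rintro ⟨h1, h2⟩
    refine ⟨⟨h1, ?_⟩, h2⟩
    by_contra h
    exact h2 (hN i (by omega))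
  · rintro ⟨⟨h1, -⟩, h2⟩
    exact ⟨h1, h2⟩

lemma part_le_psize (p : ℕ → ℕ) (hp : IsPartition p) (k : ℕ) (hk : 1 ≤ k) : p k ≤ psize p := by
  obtain ⟨N, hN⟩ := psize_eq_sum p hp
  rw [hN (max N k) (le_max_left _ _)]
  exact Finset.single_le_sum (f := p) (fun _ _ => Nat.zero_le _)
    (Finset.mem_Icc.2 ⟨hk, le_max_right _ _⟩)

/-- A partition has at most `|π|` parts. -/
lemma index_le_psize (p : ℕ → ℕ) (hp : IsPartition p) (k : ℕ) (h0 : p k ≠ 0) :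
    k ≤ psize p := by
  obtain ⟨N, hN⟩ := psize_eq_sum p hp
  have hmono : ∀ d i, 1 ≤ i → p (i + d) ≤ p i := by
    intro d
    induction d with
    | zero => intro i _; exact le_rfl
    | succ d ih => intro i hi; exact (hp.1 (i + d) (by omega)).trans (ih i hi)
  have hpos : ∀ i ∈ Finset.Icc 1 k, 1 ≤ p i := by
    intro i hi
    rw [Finset.mem_Icc] at hi
    have := hmono (k - i) i hi.1
    rw [Nat.add_sub_cancel' hi.2] at this
    omega
  rw [hN (max N k) (le_max_left _ _)]
  calc k = ∑ i ∈ Finset.Icc 1 k, 1 := by simp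
    _ ≤ ∑ i ∈ Finset.Icc 1 k, p i := Finset.sum_le_sum hpos
    _ ≤ ∑ i ∈ Finset.Icc 1 (max N k), p i :=
      Finset.sum_le_sum_of_subset (Finset.Icc_subset_Icc_right (le_max_right _ _))

lemma parts_vanish (p : ℕ → ℕ) (hp : IsPartition p) (a : ℤ) (ha : (psize p : ℤ) ≤ a) (k : ℕ)
    (hk : a < (k : ℤ)) : p k = 0 := by
  by_contra h0
  have := index_le_psize p hp k h0
  omega

/-! ### One step between consecutive rows -/

lemma NearlyInterlaces.diff_nonneg {s : ℕ} {η η' : ℕ → ℤ} (h : NearlyInterlaces s η η')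
    (i : ℕ) (h1 : 1 ≤ i) (h2 : i + 1 ≤ s) : 0 ≤ η i - η' i := by
  obtain ⟨ha, -, hc⟩ := h.2 (by omega)
  rcases Nat.lt_or_ge i 2 with hi | hi
  · obtain rfl : i = 1 := by omega
    omega
  · have := (hc i hi h2).1
    omega

lemma NearlyInterlaces.diff_succ_nonneg {s : ℕ} {η η' : ℕ → ℤ} (h : NearlyInterlaces s η η')
    (i : ℕ) (h1 : 2 ≤ i) (h2 : i ≤ s) : 0 ≤ η' i - η (i + 1) := by
  obtain ⟨-, hb, hc⟩ := h.2 (by omega)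
  rcases Nat.lt_or_ge i s with hi | hi
  · have := (hc i h1 hi).2
    omega
  · obtain rfl : i = s := by omega
    omega

lemma propTrap_term_nonneg {s : ℕ} {η η' : ℕ → ℤ} (h : NearlyInterlaces s η η')
    {i j : ℕ} (hi : 1 ≤ i) (hj : j ∈ Finset.Icc (i + 1) s) :
    0 ≤ (η i - η' i) * (η' j - η (j + 1)) := by
  rw [Finset.mem_Icc] at hj
  exact mul_nonneg (h.diff_nonneg i hi (by omega)) (h.diff_succ_nonneg j (by omega) hj.2)

lemma propTrap_nonneg {s : ℕ} {η η' : ℕ → ℤ} (h : NearlyInterlaces s η η') :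
    0 ≤ propTrap s η η' :=
  Finset.sum_nonneg fun _ hi => Finset.sum_nonneg fun _ hj =>
    propTrap_term_nonneg h (Finset.mem_Icc.1 hi).1 hj

/-- The proper trapezoidal area contains the `b × (s - b)` block of terms `x_i y_h` with
`i ≤ b < h`. -/
lemma mul_le_propTrap {s : ℕ} {η η' : ℕ → ℤ} (h : NearlyInterlaces s η η') (b : ℕ)
    (hb : b ≤ s) :
    (∑ i ∈ Finset.Icc 1 b, (η i - η' i)) * (∑ j ∈ Finset.Icc (b + 1) s, (η' j - η (j + 1))) ≤
      propTrap s η η' := by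
  rw [Finset.sum_mul_sum]
  unfold propTrap
  calc _ ≤ ∑ i ∈ Finset.Icc 1 b, ∑ j ∈ Finset.Icc (i + 1) s,
            (η i - η' i) * (η' j - η (j + 1)) := by
        refine Finset.sum_le_sum fun i hi => ?_
        rw [Finset.mem_Icc] at hi
        exact Finset.sum_le_sum_of_subset_of_nonneg
          (Finset.Icc_subset_Icc_left (by omega))
          fun j hj _ => propTrap_term_nonneg h hi.1 hj
    _ ≤ _ := Finset.sum_le_sum_of_subset_of_nonneg (Finset.Icc_subset_Icc_right hb)
        fun i hi _ => Finset.sum_nonneg fun j hj =>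
          propTrap_term_nonneg h (Finset.mem_Icc.1 hi).1 hj

/-- The weight of a step, split at position `b`. -/
lemma weight_split (η η' : ℕ → ℤ) (b s : ℕ) (hb : b ≤ s) :
    ∑ i ∈ Finset.Icc 1 (s + 1), η i - ∑ i ∈ Finset.Icc 1 s, η' i =
      ∑ i ∈ Finset.Icc 1 (b + 1), η i - ∑ i ∈ Finset.Icc 1 b, η' i -
        ∑ j ∈ Finset.Icc (b + 1) s, (η' j - η (j + 1)) := by
  induction s, hb using Nat.le_induction with
  | base => simp
  | succ n hn ih =>
    rw [Finset.sum_Icc_succ_top (by omega : 1 ≤ n + 1 + 1), Finset.sum_Icc_succ_top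
      (by omega : 1 ≤ n + 1) (f := η'), Finset.sum_Icc_succ_top (by omega : b + 1 ≤ n + 1)]
    linarith

lemma min_le_of_mul_le {u v t : ℤ} (hu : 0 ≤ u) (hv : 0 ≤ v) (h : u * v ≤ t) :
    u ≤ t ∨ v ≤ t := by
  rcases hu.eq_or_lt with rfl | hu
  · left; simpa using h
  · right; nlinarith

/-- `η` (of length `n`) dominates `μ` up to the defect `δ`: a sum of `b` of the entries
`μ_1, …, μ_n`, where `1 ≤ b < n`, exceeds the sum of the *first* `b` entries of `η` by at
most `δ`. For non-increasing `η` and `δ = 0` these are the inequalities of majorization. -/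
def Dominates (n : ℕ) (η μ : ℕ → ℤ) (δ : ℤ) : Prop :=
  ∀ B : Finset ℕ, B ⊆ Finset.Icc 1 n → 1 ≤ B.card → B.card + 1 ≤ n →
    ∑ i ∈ B, μ i ≤ ∑ i ∈ Finset.Icc 1 B.card, η i + δ

/-- Domination passes to the next row down when the defect grows by the proper trapezoidal
area of the step. -/
lemma Dominates.descend {s : ℕ} {η η' μ : ℕ → ℤ} {δ : ℤ} (hd : Dominates (s + 1) η μ δ)
    (h : NearlyInterlaces s η η')
    (hw : ∑ i ∈ Finset.Icc 1 (s + 1), η i - ∑ i ∈ Finset.Icc 1 s, η' i = μ (s + 1)) :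
    Dominates s η' μ (propTrap s η η' + δ) := by
  intro B hB h1 h2
  have hnot : s + 1 ∉ B := fun hmem => by
    have := Finset.mem_Icc.1 (hB hmem)
    omega
  have hsub : B ⊆ Finset.Icc 1 (s + 1) := hB.trans (Finset.Icc_subset_Icc_right (by omega))
  have hcard : (insert (s + 1) B).card = B.card + 1 := Finset.card_insert_of_notMem hnot
  have e1 := hd B hsub h1 (by omega)
  have e2 := hd (insert (s + 1) B)
    (Finset.insert_subset (Finset.mem_Icc.2 ⟨by omega, le_rfl⟩) hsub) (by omega) (by omega)
  rw [hcard, Finset.sum_insert hnot] at e2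
  have hsplit := weight_split η η' B.card s (by omega)
  have hu : 0 ≤ ∑ i ∈ Finset.Icc 1 B.card, (η i - η' i) := Finset.sum_nonneg fun i hi => by
    rw [Finset.mem_Icc] at hi
    exact h.diff_nonneg i hi.1 (by omega)
  have hv : 0 ≤ ∑ j ∈ Finset.Icc (B.card + 1) s, (η' j - η (j + 1)) :=
    Finset.sum_nonneg fun i hi => by
      rw [Finset.mem_Icc] at hi
      exact h.diff_succ_nonneg i (by omega) hi.2
  have hx := Finset.sum_sub_distrib (s := Finset.Icc 1 B.card) (fun i => η i) (fun i => η' i)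
  rcases min_le_of_mul_le hu hv (mul_le_propTrap h B.card (by omega)) with hle | hle <;> linarith

/-- Lower bound for `η'_1 - η_2`, the only difference `η'_i - η_{i+1}` that may be negative. -/
lemma gap_first {s : ℕ} {η η' μ : ℕ → ℤ} {δ : ℤ} (hs : 1 ≤ s) (hd : Dominates (s + 1) η μ δ)
    (h : NearlyInterlaces s η η')
    (hw : ∑ i ∈ Finset.Icc 1 (s + 1), η i - ∑ i ∈ Finset.Icc 1 s, η' i = μ (s + 1))
    (hE : 2 ≤ s → η 2 - η 1 ≤ δ) :
    η 2 - η' 1 ≤ propTrap s η η' + δ := by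
  have e := hd {s + 1} (by simp) (by simp) (by simp; omega)
  have hsplit := weight_split η η' 1 s hs
  have ht := mul_le_propTrap h 1 hs
  have h0 := propTrap_nonneg h
  have hv : 0 ≤ ∑ j ∈ Finset.Icc (1 + 1) s, (η' j - η (j + 1)) :=
    Finset.sum_nonneg fun i hi => by
      rw [Finset.mem_Icc] at hi
      exact h.diff_succ_nonneg i (by omega) hi.2
  have h2 : ∑ i ∈ Finset.Icc 1 (1 + 1), η i = η 1 + η 2 := by
    rw [Finset.sum_Icc_succ_top (by omega)]; simp
  rw [h2] at hsplit
  simp only [Finset.Icc_self, Finset.sum_singleton, Finset.card_singleton] at e hsplit ht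
  rcases Nat.lt_or_ge s 2 with hs2 | hs2
  · rw [Finset.Icc_eq_empty (by omega : ¬ 1 + 1 ≤ s), Finset.sum_empty] at hsplit
    linarith
  · have hx := h.diff_nonneg 1 le_rfl hs2
    rcases hx.eq_or_lt with hx | hx
    · linarith [hE hs2]
    · nlinarith

/-- Lower bound for `η_s - η'_s`, the only difference `η_i - η'_i` that may be negative. -/
lemma gap_last {s : ℕ} {η η' μ : ℕ → ℤ} {δ : ℤ} (hs : 1 ≤ s) (hd : Dominates (s + 1) η μ δ)
    (h : NearlyInterlaces s η η') (hw : ∑ i ∈ Finset.Icc 1 s, η' i = ∑ i ∈ Finset.Icc 1 s, μ i)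
    (hE : 2 ≤ s → η (s + 1) - η s ≤ δ) :
    η' s - η s ≤ propTrap s η η' + δ := by
  obtain ⟨b, rfl⟩ : ∃ b, s = b + 1 := ⟨s - 1, by omega⟩
  have e := hd (Finset.Icc 1 (b + 1)) (Finset.Icc_subset_Icc_right (by omega)) (by simp)
    (by simp)
  rw [Nat.card_Icc, Nat.add_sub_cancel, ← hw, Finset.sum_Icc_succ_top (by omega),
    Finset.sum_Icc_succ_top (by omega)] at e
  have ht := mul_le_propTrap h b (by omega)
  have h0 := propTrap_nonneg h
  have hu : 0 ≤ ∑ i ∈ Finset.Icc 1 b, (η i - η' i) := Finset.sum_nonneg fun i hi => by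
    rw [Finset.mem_Icc] at hi
    exact h.diff_nonneg i hi.1 (by omega)
  have hx := Finset.sum_sub_distrib (s := Finset.Icc 1 b) (fun i => η i) (fun i => η' i)
  simp only [Finset.Icc_self, Finset.sum_singleton] at ht
  rcases Nat.lt_or_ge b 1 with hb | hb
  · obtain rfl : b = 0 := by omega
    simp at e
    linarith
  · have hy := h.diff_succ_nonneg (b + 1) (by omega) le_rfl
    rcases hy.eq_or_lt with hy | hy
    · linarith [hE (by omega)]
    · nlinarith

/-! ### The top row -/

/-- A non-increasing sequence has its largest `|A|`-element sum at the first `|A|` positions. -/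
lemma sum_le_sum_initial (n : ℕ) (lam : ℕ → ℤ)
    (hlam : ∀ i, 1 ≤ i → i + 1 ≤ n → lam (i + 1) ≤ lam i) (A : Finset ℕ)
    (hA : A ⊆ Finset.Icc 1 n) :
    ∑ i ∈ A, lam i ≤ ∑ i ∈ Finset.Icc 1 A.card, lam i := by
  induction n generalizing A with
  | zero =>
    obtain rfl : A = ∅ := by simpa using hA
    simp
  | succ n ih =>
    have ih' := ih fun i h1 h2 => hlam i h1 (by omega)
    by_cases hmem : n + 1 ∈ A
    · have hsub : A.erase (n + 1) ⊆ Finset.Icc 1 n := fun i hi => by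
        have h1 := Finset.mem_Icc.1 (hA (Finset.mem_of_mem_erase hi))
        have h2 := Finset.ne_of_mem_erase hi
        exact Finset.mem_Icc.2 ⟨h1.1, by omega⟩
      have hcard : A.card = (A.erase (n + 1)).card + 1 :=
        (Finset.card_erase_add_one hmem).symm
      have hle : (A.erase (n + 1)).card ≤ n := by
        simpa using Finset.card_le_card hsub
      have hanti : ∀ d i, 1 ≤ i → i + d ≤ n + 1 → lam (i + d) ≤ lam i := by
        intro d
        induction d with
        | zero => intro i _ _; exact le_rfl
        | succ d ihd =>
          intro i h1 h2
          exact (hlam (i + d) (by omega) h2).trans (ihd i h1 (by omega))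
      have hlast := hanti (n - (A.erase (n + 1)).card) ((A.erase (n + 1)).card + 1)
        (by omega) (by omega)
      rw [show (A.erase (n + 1)).card + 1 + (n - (A.erase (n + 1)).card) = n + 1 by omega]
        at hlast
      rw [hcard, Finset.sum_Icc_succ_top (by omega), ← Finset.sum_erase_add A _ hmem]
      linarith [ih' _ hsub]
    · refine ih' A fun i hi => ?_
      have h1 := Finset.mem_Icc.1 (hA hi)
      have h2 : i ≠ n + 1 := fun h => hmem (h ▸ hi)
      exact Finset.mem_Icc.2 ⟨h1.1, by omega⟩

/-! ### Descent through the pattern -/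

/-- The proper trapezoidal area contributed by the rows with index at least `j`. -/
def areaAbove (r : ℕ) (L : ℕ → ℕ → ℤ) (j : ℕ) : ℤ :=
  ∑ t ∈ Finset.Icc j r, propTrap t (L (t + 1)) (L t)

lemma areaAbove_step (r : ℕ) (L : ℕ → ℕ → ℤ) (j : ℕ) (hj : j ≤ r) :
    areaAbove r L j = propTrap j (L (j + 1)) (L j) + areaAbove r L (j + 1) := by
  unfold areaAbove
  rw [← Finset.insert_Icc_succ_left_eq_Icc hj, Finset.sum_insert (by simp)]
  rfl

lemma areaAbove_le (r : ℕ) (L : ℕ → ℕ → ℤ) (hL : IsNearPattern r L) (j : ℕ) (hj : 1 ≤ j)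
    (hjr : j ≤ r) : areaAbove r L j ≤ patPropTrap r L := by
  have h1 : areaAbove r L j ≤ areaAbove r L 1 :=
    Finset.sum_le_sum_of_subset_of_nonneg (Finset.Icc_subset_Icc_left hj) fun t ht _ => by
      rw [Finset.mem_Icc] at ht
      exact propTrap_nonneg (hL.1 t ht.1 ht.2)
  rw [areaAbove_step r L 1 (by omega)] at h1
  have h2 : propTrap 1 (L (1 + 1)) (L 1) = 0 := by simp [propTrap]
  rw [h2, zero_add] at h1
  exact h1

lemma rowSum_eq (n : ℕ) (L : ℕ → ℕ → ℤ) (μ : ℕ → ℤ) (hwt : HasWeightZ n L μ) (j : ℕ)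
    (hj : j ≤ n) : rowSumZ L j = ∑ i ∈ Finset.Icc 1 j, μ i := by
  induction j with
  | zero => simp [rowSumZ]
  | succ j ih =>
    have := hwt (j + 1) (by omega) hj
    rw [Nat.add_sub_cancel] at this
    rw [Finset.sum_Icc_succ_top (by omega), ← ih (by omega)]
    linarith

/-- The three invariants of the descent, for row `j`. -/
def RowInvariant (r : ℕ) (L : ℕ → ℕ → ℤ) (μ : ℕ → ℤ) (j : ℕ) : Prop :=
  Dominates j (L j) μ (areaAbove r L j) ∧
    (3 ≤ j → L j 2 - L j 1 ≤ areaAbove r L j ∧ L j j - L j (j - 1) ≤ areaAbove r L j)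

lemma gaps_of_invariant (r : ℕ) (L : ℕ → ℕ → ℤ) (μ : ℕ → ℤ) (hL : IsNearPattern r L)
    (hwt : HasWeightZ (r + 1) L μ) (j : ℕ) (hj : 1 ≤ j) (hjr : j ≤ r)
    (hinv : RowInvariant r L μ (j + 1)) :
    L (j + 1) 2 - L j 1 ≤ areaAbove r L j ∧ L j j - L (j + 1) j ≤ areaAbove r L j := by
  have hw := hwt (j + 1) (by omega) (by omega)
  rw [areaAbove_step r L j hjr]
  exact ⟨gap_first hj hinv.1 (hL.1 j hj hjr) hw fun h => (hinv.2 (by omega)).1,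
    gap_last hj hinv.1 (hL.1 j hj hjr) (rowSum_eq _ L μ hwt j (by omega))
      fun h => (hinv.2 (by omega)).2⟩

lemma invariant_step (r : ℕ) (L : ℕ → ℕ → ℤ) (μ : ℕ → ℤ) (hL : IsNearPattern r L)
    (hwt : HasWeightZ (r + 1) L μ) (j : ℕ) (hj : 1 ≤ j) (hjr : j ≤ r)
    (hinv : RowInvariant r L μ (j + 1)) : RowInvariant r L μ j := by
  have hgap := gaps_of_invariant r L μ hL hwt j hj hjr hinv
  refine ⟨?_, fun h3 => ?_⟩
  · rw [areaAbove_step r L j hjr]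
    exact hinv.1.descend (hL.1 j hj hjr) (hwt (j + 1) (by omega) (by omega))
  · -- Here `λ^j_2 ≤ λ^{j+1}_2` and `λ^{j+1}_j ≤ λ^j_{j-1}`, so the gaps inside row `j` are
    -- bounded by the gaps between the rows.
    obtain ⟨-, -, hc⟩ := (hL.1 j hj hjr).2 (by omega)
    have e1 := (hc 2 le_rfl h3).1
    have e2 := (hc (j - 1) (by omega) (by omega)).2
    rw [show j - 1 + 1 = j by omega] at e2
    constructor <;> linarith [hgap.1, hgap.2]

lemma invariant_top (r : ℕ) (lam μ : ℕ → ℤ)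
    (hlam : ∀ i, 1 ≤ i → i ≤ r → lam (i + 1) ≤ lam i) (hmaj : MajZ (r + 1) lam μ)
    (L : ℕ → ℕ → ℤ) (hbound : ∀ i, 1 ≤ i → i ≤ r + 1 → L (r + 1) i = lam i) :
    RowInvariant r L μ (r + 1) := by
  have h0 : areaAbove r L (r + 1) = 0 := by simp [areaAbove]
  rw [RowInvariant, h0]
  refine ⟨fun B hB h1 h2 => ?_, fun h3 => ?_⟩
  · obtain ⟨A, hA, hcard, hle⟩ := hmaj.1 B hB
    have hsum := sum_le_sum_initial (r + 1) lam (fun i a b => hlam i a (by omega)) A hA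
    rw [hcard] at hsum
    have : ∑ i ∈ Finset.Icc 1 B.card, L (r + 1) i = ∑ i ∈ Finset.Icc 1 B.card, lam i :=
      Finset.sum_congr rfl fun i hi => by
        rw [Finset.mem_Icc] at hi
        exact hbound i hi.1 (by omega)
    linarith
  · rw [Nat.add_sub_cancel, hbound 2 (by omega) (by omega), hbound 1 (by omega) (by omega),
      hbound (r + 1) (by omega) le_rfl, hbound r (by omega) (by omega)]
    have a1 := hlam 1 (by omega) (by omega)
    have a2 := hlam r (by omega) le_rfl
    norm_num at a1
    constructor <;> linarith

lemma invariant_all (r : ℕ) (lam μ : ℕ → ℤ)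
    (hlam : ∀ i, 1 ≤ i → i ≤ r → lam (i + 1) ≤ lam i) (hmaj : MajZ (r + 1) lam μ)
    (L : ℕ → ℕ → ℤ) (hL : IsNearPattern r L)
    (hbound : ∀ i, 1 ≤ i → i ≤ r + 1 → L (r + 1) i = lam i)
    (hwt : HasWeightZ (r + 1) L μ) (j : ℕ) (hj : 1 ≤ j) (hjr : j ≤ r + 1) :
    RowInvariant r L μ j := by
  induction hjr using Nat.decreasingInduction with
  | self => exact invariant_top r lam μ hlam hmaj L hbound
  | of_succ n hn ih =>
    exact invariant_step r L μ hL hwt n hj (by omega) (ih (by omega))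

/-! ### The shifted pattern -/

/-- The shift changes a difference `x_i` only for `i = j`. -/
lemma shift_diff (j i : ℕ) (k : ℤ) (η η' : ℕ → ℤ) (h1 : 1 ≤ i) (h2 : i ≤ j) :
    shiftSeq j k η i - shiftSeq (j - 1) k η' i = η i - η' i + if i = j then k else 0 := by
  unfold shiftSeq
  split_ifs <;> first | omega | (subst_vars; ring)

/-- The shift changes a difference `y_i` only for `i = 1`. -/
lemma shift_diff_succ (j i : ℕ) (k : ℤ) (η η' : ℕ → ℤ) (h1 : 1 ≤ i) (h2 : i ≤ j) :
    shiftSeq (j - 1) k η' i - shiftSeq j k η (i + 1) =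
      η' i - η (i + 1) + if i = 1 then k else 0 := by
  unfold shiftSeq
  split_ifs <;> first | omega | (subst_vars; ring)

/-- The shift by `k = □^prop(P) + Σ_j (|π^{j,1}| + |π^{j,j}|)` of an
approximately overlaid near pattern with bounding sequence `lam` and weight `μ`
(where `lam` majorizes `μ`) is a POP: in the shifted data every row interlaces the next
(and all rows are non-increasing), and every overlay partition fits into the rectangle
determined by the shifted rows. -/
theorem stmt18 (r : ℕ) (hr : 1 ≤ r) (lam μ : ℕ → ℤ)
    (hlam : ∀ i, 1 ≤ i → i ≤ r → lam (i + 1) ≤ lam i)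
    (hmaj : MajZ (r + 1) lam μ)
    (L : ℕ → ℕ → ℤ) (hL : IsNearPattern r L)
    (hbound : ∀ i, 1 ≤ i → i ≤ r + 1 → L (r + 1) i = lam i)
    (hwt : HasWeightZ (r + 1) L μ)
    (Q : ℕ → ℕ → ℕ → ℕ) (hQ : PatternOverlay r L Q) :
    ∀ k : ℤ,
      k = patPropTrap r L +
            ∑ j ∈ Finset.Icc 1 r, ((psize (Q j 1) : ℤ) + (psize (Q j j) : ℤ)) →
      (∀ j, 1 ≤ j → j ≤ r + 1 → ∀ i, 1 ≤ i → i + 1 ≤ j →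
          shiftSeq (j - 1) k (L j) (i + 1) ≤ shiftSeq (j - 1) k (L j) i) ∧
      (∀ j, 1 ≤ j → j ≤ r → ∀ i, 1 ≤ i → i ≤ j →
          shiftSeq (j - 1) k (L j) i ≤ shiftSeq j k (L (j + 1)) i ∧
          shiftSeq j k (L (j + 1)) (i + 1) ≤ shiftSeq (j - 1) k (L j) i) ∧
      (∀ j, 1 ≤ j → j ≤ r → ∀ i, 1 ≤ i → i ≤ j →
          FitsRect (Q j i)
            (shiftSeq j k (L (j + 1)) i - shiftSeq (j - 1) k (L j) i)
            (shiftSeq (j - 1) k (L j) i - shiftSeq j k (L (j + 1)) (i + 1))) := by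
  intro k hk
  have hgap : ∀ j, 1 ≤ j → j ≤ r →
      L (j + 1) 2 - L j 1 ≤ patPropTrap r L ∧ L j j - L (j + 1) j ≤ patPropTrap r L := by
    intro j h1 h2
    have h := gaps_of_invariant r L μ hL hwt j h1 h2
      (invariant_all r lam μ hlam hmaj L hL hbound hwt (j + 1) (by omega) (by omega))
    have := areaAbove_le r L hL j h1 h2
    exact ⟨h.1.trans this, h.2.trans this⟩
  have hksize : ∀ j, 1 ≤ j → j ≤ r →
      patPropTrap r L + ((psize (Q j 1) : ℤ) + (psize (Q j j) : ℤ)) ≤ k := by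
    intro j h1 h2
    rw [hk]
    have := Finset.single_le_sum (s := Finset.Icc 1 r)
      (f := fun j => (psize (Q j 1) : ℤ) + (psize (Q j j) : ℤ))
      (fun _ _ => by positivity) (Finset.mem_Icc.2 ⟨h1, h2⟩)
    linarith
  -- The `FitsRect` condition, together with non-negativity of both sides of the rectangle.
  have key : ∀ j, 1 ≤ j → j ≤ r → ∀ i, 1 ≤ i → i ≤ j →
      (0 ≤ shiftSeq j k (L (j + 1)) i - shiftSeq (j - 1) k (L j) i ∧
        ∀ m : ℕ, shiftSeq j k (L (j + 1)) i - shiftSeq (j - 1) k (L j) i < (m : ℤ) →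
          Q j i m = 0) ∧
      (0 ≤ shiftSeq (j - 1) k (L j) i - shiftSeq j k (L (j + 1)) (i + 1) ∧
        ∀ m : ℕ, 1 ≤ m → (Q j i m : ℤ) ≤
          shiftSeq (j - 1) k (L j) i - shiftSeq j k (L (j + 1)) (i + 1)) := by
    intro j h1 h2 i h3 h4
    have hI := hL.1 j h1 h2
    have hO := hQ.2 j h1 h2
    have hP := hQ.1 j i h3 h4 h2
    have hg := hgap j h1 h2
    have hs := hksize j h1 h2
    rw [shift_diff j i k _ _ h3 h4, shift_diff_succ j i k _ _ h3 h4]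
    constructor
    · by_cases hij : i = j
      · subst hij
        have hb : (psize (Q i i) : ℤ) ≤ L (i + 1) i - L i i + k := by
          have : (0 : ℤ) ≤ psize (Q i 1) := by positivity
          linarith [hg.2]
        rw [if_pos rfl]
        exact ⟨le_trans (by positivity) hb, parts_vanish _ hP _ hb⟩
      · rw [if_neg hij, add_zero]
        refine ⟨hI.diff_nonneg i h3 (by omega), ?_⟩
        obtain ⟨ha, -, hc⟩ := hO (by omega)
        by_cases hi : i = 1
        · subst hi; exact ha
        · exact (hc i (by omega) (by omega)).1
    · by_cases hi : i = 1
      · subst hi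
        have hb : (psize (Q j 1) : ℤ) ≤ L j 1 - L (j + 1) (1 + 1) + k := by
          have : (0 : ℤ) ≤ psize (Q j j) := by positivity
          have := hg.1
          norm_num
          linarith
        rw [if_pos rfl]
        refine ⟨le_trans (by positivity) hb, fun m hm => le_trans ?_ hb⟩
        exact_mod_cast part_le_psize _ hP m hm
      · rw [if_neg hi, add_zero]
        refine ⟨hI.diff_succ_nonneg i (by omega) h4, ?_⟩
        obtain ⟨-, hb, hc⟩ := hO (by omega)
        by_cases hij : i = j
        · subst hij; exact hb
        · exact (hc i (by omega) (by omega)).2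
  refine ⟨fun j h1 h2 i h3 h4 => ?_, fun j h1 h2 i h3 h4 => ?_, fun j h1 h2 i h3 h4 => ?_⟩
  · -- Interlacing with the row below forces row `j` to be non-increasing.
    obtain ⟨t, rfl⟩ : ∃ t, j = t + 1 := ⟨j - 1, by omega⟩
    have := key t (by omega) (by omega) i h3 (by omega)
    rw [Nat.add_sub_cancel]
    linarith [this.1.1, this.2.1]
  · have := key j h1 h2 i h3 h4
    exact ⟨by linarith [this.1.1], by linarith [this.2.1]⟩
  · have := key j h1 h2 i h3 h4
    exact ⟨this.1.2, this.2.2⟩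
end

section
/- Fix integers r ≥ 1 and d ≥ 0, a non-increasing integer sequence λ: λ_1 ≥ … ≥ λ_{r+1}, and μ = (μ_1, …, μ_{r+1}) ∈ ℤ^{r+1} such that λ majorizes μ. Let φ be the map sending an r-colored partition (π^1, …, π^r) of d to the approximately overlaid near pattern obtained by iteratively applying ξ: setting λ^{r+1} := λ and, for j = r, r−1, …, 1, (λ^j; π^{j,1}, …, π^{j,j}) := ξ_{λ^{j+1}}(μ_{j+1}, π^j). For every integer k ≥ d, the composition of the shift by k with φ is a bijection from the set of r-colored partitions of d onto the set of partition overlaid patterns (POPs) whose bounding sequence is the shift by k of λ, whose weight is (μ_1 + k, …, μ_{r+1} + k), and which satisfy □^prop(P) + Σ_{1 ≤ i ≤ j ≤ r} |π^{j,i}| = d, where P is the underlying pattern and π^{j,i} the overlay partitions. -/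
/-!
One step `ξ_η` is a Durfee-type dissection. For `c_j = μ - η_{j+1}` the number `a_j` is the height
of the largest rectangle `a × (a - c_j)` inside the diagram of `π`, so the parts of `π` up to the
`a_j`-th are at least `b_j` and the later ones are at most `b_j` (`Bseq_le_part`, `part_le_Bseq`).
Cutting `π` at the heights `a_j` and lowering the `j`-th block by `b_j` produces the `π^j`. Since
`η_i - η'_i = a_i - a_{i-1}` and `η'_j - η_{j+1} = b_{j-1} - b_j`, the removed rectangles have total
area `□^prop(η, η')` by telescoping (`psize_xi`). The dissection is reversible: the `a_j` are the
partial sums of `η - η'`, and raising and concatenating the blocks recovers `π` (`xi_injective`,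
`xi_surjective`). Iterating over the rows gives injectivity, surjectivity, the weight and the box
count, because the shift changes neither `□^prop` nor the rectangles other than the outermost ones.

What remains is that the image of `φ`, once shifted by `k ≥ d`, is a genuine overlaid pattern. For
the outermost rectangles this amounts to `π_1 ≤ k + η_1 - μ` and `length π ≤ k + μ - η_{s+1}`, as
long as the shifted `η` is non-increasing (`xi_shift`). Both bounds follow from the invariant that
each row majorizes `(μ_1, μ_2, …)` up to a defect equal to the number of boxes used so far
(`NearMaj`): one step of `ξ` increases the defect by at most `|π|` (`NearMaj.xi`), because
`a_j ≤ max(c_j, 0) + |π|` (`aOf_le_size`).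
-/

open Finset

/-- An integral Gelfand–Tsetlin pattern of size `n` (rows non-increasing, each row
interlacing the next). -/
def IsGTPatternZ (n : ℕ) (L : ℕ → ℕ → ℤ) : Prop :=
  (∀ j, 1 ≤ j → j ≤ n → ∀ i, 1 ≤ i → i + 1 ≤ j → L j (i + 1) ≤ L j i) ∧
  (∀ j, 1 ≤ j → j + 1 ≤ n → ∀ i, 1 ≤ i → i ≤ j →
    L j i ≤ L (j + 1) i ∧ L (j + 1) (i + 1) ≤ L j i)

/-- A partition overlaid pattern (POP): an integral GT pattern `L` of size `r + 1`
together with partitions `Q j i` (`1 ≤ i ≤ j ≤ r`) fitting into the corresponding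
rectangles. -/
def IsPOP (r : ℕ) (L : ℕ → ℕ → ℤ) (Q : ℕ → ℕ → ℕ → ℕ) : Prop :=
  IsGTPatternZ (r + 1) L ∧
  ∀ j i, 1 ≤ i → i ≤ j → j ≤ r →
    IsPartition (Q j i) ∧
    FitsRect (Q j i) (L (j + 1) i - L j i) (L j i - L (j + 1) (i + 1))

/-- Membership in the target set of the bijection of Theorem `t:bijection`: a POP with
bounding sequence the shift by `k` of `lam`, weight `(μ_1 + k, …, μ_{r+1} + k)`, and
`□^prop + (number of overlay boxes) = d`. -/
def InTarget (r d : ℕ) (k : ℤ) (lam μ : ℕ → ℤ)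
    (L : ℕ → ℕ → ℤ) (Q : ℕ → ℕ → ℕ → ℕ) : Prop :=
  IsPOP r L Q ∧
  (∀ i, 1 ≤ i → i ≤ r + 1 → L (r + 1) i = shiftSeq r k lam i) ∧
  HasWeightZ (r + 1) L (fun i => μ i + k) ∧
  patPropTrap r L +
      ∑ j ∈ Finset.Icc 1 r, ∑ i ∈ Finset.Icc 1 j, (psize (Q j i) : ℤ) = (d : ℤ)

/-- Auxiliary recursion computing the rows of `φ` from the top down:
`phiGo … m` is row `r + 1 - m`. -/
noncomputable def phiGo (r : ℕ) (lam μs : ℕ → ℤ) (π : ℕ → ℕ → ℕ) : ℕ → ℕ → ℤ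
  | 0 => lam
  | m + 1 => xiRow (r - m) (phiGo r lam μs π m) (μs (r + 1 - m)) (π (r - m))

/-- Row `j` of the approximately overlaid near pattern `φ(π^1, …, π^r)`:
`λ^{r+1} = lam` and `λ^j = ξ_{λ^{j+1}}(μ_{j+1}, π^j)` for `j = r, …, 1`. -/
noncomputable def phiRow (r : ℕ) (lam μs : ℕ → ℤ) (π : ℕ → ℕ → ℕ) (j : ℕ) : ℕ → ℤ :=
  phiGo r lam μs π (r + 1 - j)

/-- Overlay partition `π^{j,i}` of `φ(π^1, …, π^r)`. -/
noncomputable def phiParts (r : ℕ) (lam μs : ℕ → ℤ) (π : ℕ → ℕ → ℕ) (j i : ℕ) : ℕ → ℕ :=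
  xiParts j (phiRow r lam μs π (j + 1)) (μs (j + 1)) (π j) i

/-! ### Partitions and their sizes -/

theorem IsPartition.le {p : ℕ → ℕ} (hp : IsPartition p) {i j : ℕ} (hi : 1 ≤ i) (hij : i ≤ j) :
    p j ≤ p i := by
  induction j, hij using Nat.le_induction with
  | base => exact le_rfl
  | succ n hn ih => exact (hp.1 n (hi.trans hn)).trans ih

theorem psize_eq_sum_range {p : ℕ → ℕ} {N : ℕ} (hN : ∀ i, N < i → p i = 0) :
    psize p = ∑ i ∈ range N, p (i + 1) := by
  have h1 : psize p = ∑ i ∈ Icc 1 N, p i := by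
    unfold psize
    apply finsum_mem_eq_sum_of_inter_support_eq
    ext i
    simp only [Set.mem_inter_iff, Set.mem_Ici, Function.mem_support, coe_Icc, Set.mem_Icc]
    constructor
    · rintro ⟨h, h'⟩
      refine ⟨⟨h, ?_⟩, h'⟩
      by_contra hlt
      exact h' (hN i (by omega))
    · rintro ⟨h, h'⟩
      exact ⟨h.1, h'⟩
  rw [h1]
  clear h1 hN
  induction N with
  | zero => simp
  | succ N ih => rw [sum_Icc_succ_top (by omega), sum_range_succ, ih]

theorem psize_congr {p q : ℕ → ℕ} (h : ∀ m, 1 ≤ m → p m = q m) : psize p = psize q :=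
  finsum_mem_congr rfl fun m hm => h m hm

theorem mul_le_psize {p : ℕ → ℕ} (hp : IsPartition p) {m : ℕ} (hm : 1 ≤ m) :
    m * p m ≤ psize p := by
  obtain ⟨N, hN⟩ := hp.2
  rw [psize_eq_sum_range (N := N + m) fun i hi => hN i (by omega)]
  calc m * p m = ∑ i ∈ range m, p m := by simp
    _ ≤ ∑ i ∈ range m, p (i + 1) :=
        sum_le_sum fun i hi => hp.le (by omega) (by have := mem_range.1 hi; omega)
    _ ≤ ∑ i ∈ range (N + m), p (i + 1) :=
        sum_le_sum_of_subset (by intro i; simp only [mem_range]; omega)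

/-! ### The Durfee-type number `aOf` -/

theorem bddAbove_aOf {p : ℕ → ℕ} (hp : IsPartition p) (c : ℤ) :
    BddAbove {a : ℕ | a = 0 ∨ (a : ℤ) - c ≤ (p a : ℤ)} := by
  obtain ⟨N, hN⟩ := hp.2
  refine ⟨N + c.toNat, ?_⟩
  rintro a (rfl | h)
  · omega
  · by_contra hlt
    rw [hN a (by omega)] at h
    omega

theorem aOf_mem {p : ℕ → ℕ} (hp : IsPartition p) (c : ℤ) :
    aOf p c = 0 ∨ (aOf p c : ℤ) - c ≤ p (aOf p c) :=
  Nat.sSup_mem (s := {a : ℕ | a = 0 ∨ (a : ℤ) - c ≤ (p a : ℤ)}) ⟨0, Or.inl rfl⟩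
    (bddAbove_aOf hp c)

theorem le_aOf {p : ℕ → ℕ} (hp : IsPartition p) {c : ℤ} {a : ℕ} (h : (a : ℤ) - c ≤ p a) :
    a ≤ aOf p c :=
  le_csSup (bddAbove_aOf hp c) (Or.inr h)

theorem lt_of_aOf_lt {p : ℕ → ℕ} (hp : IsPartition p) {c : ℤ} {a : ℕ} (h : aOf p c < a) :
    (p a : ℤ) < a - c := by
  by_contra hlt
  have := le_aOf hp (c := c) (a := a) (by omega)
  omega

theorem aOf_eq {p : ℕ → ℕ} (hp : IsPartition p) {c : ℤ} {a : ℕ}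
    (h1 : a = 0 ∨ (a : ℤ) - c ≤ p a) (h2 : (p (a + 1) : ℤ) < a + 1 - c) : aOf p c = a := by
  apply le_antisymm
  · by_contra hlt
    have h3 := hp.le (i := a + 1) (j := aOf p c) (by omega) (by omega)
    have := aOf_mem hp c
    omega
  · rcases h1 with h | h
    · omega
    · exact le_aOf hp h

theorem self_le_aOf {p : ℕ → ℕ} (hp : IsPartition p) (c : ℤ) : c ≤ aOf p c := by
  by_contra hlt
  have := le_aOf hp (c := c) (a := c.toNat) (by omega)
  omega

theorem aOf_mono {p : ℕ → ℕ} (hp : IsPartition p) {c c' : ℤ} (h : c ≤ c') :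
    aOf p c ≤ aOf p c' := by
  rcases aOf_mem hp c with h0 | h0
  · omega
  · exact le_aOf hp (by omega)

theorem aOf_sub_anti {p : ℕ → ℕ} (hp : IsPartition p) {c c' : ℤ} (h : c ≤ c') :
    (aOf p c' : ℤ) - c' ≤ aOf p c - c := by
  by_contra hlt
  have h1 := lt_of_aOf_lt hp (c := c) (Nat.lt_add_one _)
  have h2 := hp.le (i := aOf p c + 1) (j := aOf p c') (by omega) (by omega)
  have := aOf_mem hp c'
  push_cast at h1
  omega

/-- A large `aOf p c` forces many boxes; this controls how fast majorization can be lost. -/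
theorem aOf_le_size {p : ℕ → ℕ} (hp : IsPartition p) (c : ℤ) :
    (aOf p c : ℤ) ≤ max c 0 + psize p := by
  rcases aOf_mem hp c with h0 | h0
  · omega
  · by_cases hz : aOf p c = 0
    · omega
    have h1 : ((aOf p c * p (aOf p c) : ℕ) : ℤ) ≤ psize p := by
      exact_mod_cast mul_le_psize hp (by omega)
    push_cast at h1
    have h2 : (1 : ℤ) ≤ aOf p c := by omega
    by_cases hb : p (aOf p c) = 0
    · omega
    have h3 : (1 : ℤ) ≤ p (aOf p c) := by omega
    nlinarith [le_max_right c 0]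

/-! ### The sequences `a_j`, `b_j` and the entries of `ξ` -/

theorem Aseq_zero (p : ℕ → ℕ) (η : ℕ → ℤ) (μ : ℤ) : Aseq p η μ 0 = 0 := by simp [Aseq]

theorem Aseq_pos (p : ℕ → ℕ) (η : ℕ → ℤ) (μ : ℤ) {j : ℕ} (hj : 1 ≤ j) :
    Aseq p η μ j = aOf p (μ - η (j + 1)) := by
  rw [Aseq, if_neg (by omega)]

section
variable {s : ℕ} {η : ℕ → ℤ} {μ : ℤ} {p : ℕ → ℕ}

theorem Aseq_mono (hp : IsPartition p) (hη : ∀ i, 2 ≤ i → i + 1 ≤ s → η (i + 1) ≤ η i)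
    {j : ℕ} (hj : 1 ≤ j) (hjs : j < s) : Aseq p η μ (j - 1) ≤ Aseq p η μ j := by
  obtain rfl | h2 := hj.eq_or_lt
  · simp [Aseq_zero]
  · rw [Aseq_pos _ _ _ hj, Aseq_pos _ _ _ (by omega : 1 ≤ j - 1)]
    apply aOf_mono hp
    have := hη j h2 (by omega)
    rw [Nat.sub_add_cancel hj]
    omega

theorem Bseq_anti (hp : IsPartition p) (hη : ∀ i, 2 ≤ i → i + 1 ≤ s → η (i + 1) ≤ η i)
    {j : ℕ} (hj : 2 ≤ j) (hjs : j < s) : Bseq p η μ j ≤ Bseq p η μ (j - 1) := by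
  rw [Bseq, Bseq, Aseq_pos _ _ _ (by omega), Aseq_pos _ _ _ (by omega : 1 ≤ j - 1)]
  apply aOf_sub_anti hp
  have := hη j hj (by omega)
  rw [Nat.sub_add_cancel (by omega)]
  omega

theorem Bseq_nonneg (hp : IsPartition p) {j : ℕ} (hj : 1 ≤ j) : 0 ≤ Bseq p η μ j := by
  have := self_le_aOf hp (μ - η (j + 1))
  rw [Bseq, Aseq_pos _ _ _ hj]
  omega

theorem Bseq_le_part (hp : IsPartition p) {j m : ℕ} (hj : 1 ≤ j) (hm : 1 ≤ m)
    (hmA : m ≤ Aseq p η μ j) : Bseq p η μ j ≤ p m := by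
  have h1 := aOf_mem hp (μ - η (j + 1))
  have h2 := hp.le hm hmA
  rw [Bseq]
  rw [Aseq_pos _ _ _ hj] at *
  omega

/-- Together with `Bseq_le_part`: the box `a_j × b_j` is a maximal rectangle of its shape in the
diagram of `p`, so the parts beyond the `a_j`-th are at most `b_j`. -/
theorem part_le_Bseq (hp : IsPartition p) {j m : ℕ} (hj : 1 ≤ j)
    (hmA : Aseq p η μ j < m) : (p m : ℤ) ≤ Bseq p η μ j := by
  have h2 := hp.le (by omega) (show Aseq p η μ j + 1 ≤ m by omega)
  rw [Bseq]
  rw [Aseq_pos _ _ _ hj] at *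
  have h1 := lt_of_aOf_lt hp (c := μ - η (j + 1)) (Nat.lt_add_one _)
  push_cast at h1
  omega

theorem xiRow_lt {j : ℕ} (hj : 1 ≤ j) (hjs : j < s) :
    xiRow s η μ p j = η j - ((Aseq p η μ j : ℤ) - (Aseq p η μ (j - 1) : ℤ)) := by
  rw [xiRow, if_neg (by omega), if_neg (by omega)]

theorem xiRow_last (hs : 2 ≤ s) : xiRow s η μ p s = η (s + 1) + Bseq p η μ (s - 1) := by
  rw [xiRow, if_neg (by omega), if_pos rfl]

theorem xiRow_one : xiRow 1 η μ p 1 = η 1 + η 2 - μ := by simp [xiRow]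

theorem xiParts_lt {j : ℕ} (hj : 1 ≤ j) (hjs : j < s) (k : ℕ) :
    xiParts s η μ p j k = if 1 ≤ k ∧ k ≤ Aseq p η μ j - Aseq p η μ (j - 1) then
    p (Aseq p η μ (j - 1) + k) - (Bseq p η μ j).toNat else 0 := by
  rw [xiParts, if_neg (by omega), if_neg (by omega)]

theorem xiParts_last (hs : 2 ≤ s) (k : ℕ) :
    xiParts s η μ p s k = p (Aseq p η μ (s - 1) + k) := by
  rw [xiParts, if_neg (by omega), if_pos rfl]

theorem xiParts_one (k : ℕ) : xiParts 1 η μ p 1 k = p k := by simp [xiParts]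

theorem sum_xiRow_lt {t : ℕ} (ht : t < s) :
    ∑ i ∈ Icc 1 t, xiRow s η μ p i = ∑ i ∈ Icc 1 t, η i - Aseq p η μ t := by
  induction t with
  | zero => simp [Aseq_zero]
  | succ t ih =>
    rw [sum_Icc_succ_top (by omega), sum_Icc_succ_top (by omega), ih (by omega),
      xiRow_lt (by omega) ht, Nat.add_sub_cancel]
    ring

theorem sum_xiRow (hs : 1 ≤ s) :
    ∑ i ∈ Icc 1 s, xiRow s η μ p i = ∑ i ∈ Icc 1 (s + 1), η i - μ := by
  obtain rfl | h2 := hs.eq_or_lt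
  · simp [sum_Icc_succ_top, xiRow_one]
  · obtain ⟨t, rfl⟩ : ∃ t, s = t + 1 := ⟨s - 1, by omega⟩
    rw [sum_Icc_succ_top (by omega), sum_Icc_succ_top (by omega), sum_Icc_succ_top (by omega),
      sum_xiRow_lt (by omega), xiRow_last h2, Bseq, Nat.add_sub_cancel]
    ring

theorem xiRow_sub_lt {j : ℕ} (hj : 2 ≤ j) (hjs : j < s) :
    xiRow s η μ p j - η (j + 1) = Bseq p η μ (j - 1) - Bseq p η μ j := by
  rw [xiRow_lt (by omega) hjs, Bseq, Bseq, Nat.sub_add_cancel (by omega)]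
  ring

theorem sum_xiRow_sub {i : ℕ} (hi : 1 ≤ i) (his : i < s) :
    ∑ j ∈ Icc (i + 1) s, (xiRow s η μ p j - η (j + 1)) = Bseq p η μ i := by
  have key : ∀ t, i ≤ t → t < s →
      ∑ j ∈ Icc (i + 1) t, (xiRow s η μ p j - η (j + 1)) = Bseq p η μ i - Bseq p η μ t := by
    intro t hit
    induction t, hit using Nat.le_induction with
    | base => simp
    | succ t ht ih =>
      intro h
      rw [sum_Icc_succ_top (by omega), ih (by omega), xiRow_sub_lt (by omega) h,
        Nat.add_sub_cancel]
      ring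
  obtain ⟨t, rfl⟩ : ∃ t, s = t + 1 := ⟨s - 1, by omega⟩
  rw [sum_Icc_succ_top (by omega), key t (by omega) (by omega), xiRow_last (by omega),
    Nat.add_sub_cancel]
  ring

theorem propTrap_xiRow :
    propTrap s η (xiRow s η μ p) = ∑ i ∈ Icc 1 (s - 1),
      ((Aseq p η μ i : ℤ) - Aseq p η μ (i - 1)) * Bseq p η μ i := by
  unfold propTrap
  cases s with
  | zero => simp
  | succ t =>
    rw [sum_Icc_succ_top (by omega), Icc_eq_empty_of_lt (show t + 1 < t + 1 + 1 by omega),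
      sum_empty, add_zero, Nat.add_sub_cancel]
    refine sum_congr rfl fun i hi => ?_
    rw [mem_Icc] at hi
    rw [← mul_sum, sum_xiRow_sub hi.1 (by omega), xiRow_lt hi.1 (by omega)]
    ring

theorem isPartition_xiParts (hp : IsPartition p) {i : ℕ} (hi : 1 ≤ i) (his : i ≤ s) :
    IsPartition (xiParts s η μ p i) := by
  obtain ⟨N, hN⟩ := hp.2
  by_cases hs : s = 1
  · obtain rfl : i = 1 := by omega
    subst hs
    simpa only [IsPartition, xiParts_one] using hp
  obtain rfl | h := his.eq_or_lt
  · refine ⟨fun k hk => ?_, N, fun k hk => ?_⟩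
    · rw [xiParts_last (by omega), xiParts_last (by omega)]
      exact hp.le (by omega) (by omega)
    · rw [xiParts_last (by omega)]
      exact hN _ (by omega)
  · refine ⟨fun k hk => ?_, N + Aseq p η μ i + 1, fun k hk => ?_⟩
    · rw [xiParts_lt hi h, xiParts_lt hi h]
      have := hp.le (i := Aseq p η μ (i - 1) + k) (j := Aseq p η μ (i - 1) + (k + 1))
        (by omega) (by omega)
      split_ifs <;> omega
    · rw [xiParts_lt hi h, if_neg (by omega)]

/-- Cutting `p` into `π^1, …, π^s` loses exactly the rectangles
`(a_i - a_{i-1}) × b_i`, whose total area is the proper trapezoidal area. -/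
theorem psize_xi (hs : 1 ≤ s) (hp : IsPartition p)
    (hη : ∀ i, 2 ≤ i → i + 1 ≤ s → η (i + 1) ≤ η i) :
    (psize p : ℤ) = propTrap s η (xiRow s η μ p) +
      ∑ i ∈ Icc 1 s, (psize (xiParts s η μ p i) : ℤ) := by
  obtain rfl | h2 := hs.eq_or_lt
  · simp only [propTrap, Icc_self, sum_singleton]
    rw [Icc_eq_empty_of_lt (by omega), sum_empty, zero_add,
      psize_congr fun m _ => xiParts_one (η := η) (μ := μ) (p := p) m]
  have key : ∀ t, t < s → ∑ m ∈ range (Aseq p η μ t), (p (m + 1) : ℤ) =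
      ∑ i ∈ Icc 1 t, (((Aseq p η μ i : ℤ) - Aseq p η μ (i - 1)) * Bseq p η μ i
        + psize (xiParts s η μ p i)) := by
    intro t
    induction t with
    | zero => simp [Aseq_zero]
    | succ t ih =>
      intro ht
      have hm := Aseq_mono (μ := μ) hp hη (j := t + 1) (by omega) ht
      rw [Nat.add_sub_cancel] at hm
      obtain ⟨D, hD⟩ := Nat.exists_eq_add_of_le hm
      have hq : psize (xiParts s η μ p (t + 1)) =
          ∑ m ∈ range D, xiParts s η μ p (t + 1) (m + 1) := by
        apply psize_eq_sum_range
        intro k hk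
        rw [xiParts_lt (by omega) ht, if_neg]
        rw [hD, Nat.add_sub_cancel]
        omega
      have hq' : ∀ m ∈ range D, (p (Aseq p η μ t + m + 1) : ℤ) =
          Bseq p η μ (t + 1) + (xiParts s η μ p (t + 1) (m + 1) : ℕ) := by
        intro m hm
        rw [mem_range] at hm
        have h1 := Bseq_nonneg (η := η) (μ := μ) hp (j := t + 1) (by omega)
        have h3 := Bseq_le_part (η := η) (μ := μ) hp (j := t + 1)
          (m := Aseq p η μ t + m + 1) (by omega) (by omega) (by omega)
        rw [xiParts_lt (by omega) ht, if_pos (by rw [hD, Nat.add_sub_cancel]; omega),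
          Nat.add_sub_cancel, ← add_assoc]
        omega
      rw [sum_Icc_succ_top (by omega), ← ih (by omega), hq, Nat.add_sub_cancel, hD,
        sum_range_add, sum_congr rfl hq', sum_add_distrib]
      simp
  obtain ⟨N, hN⟩ := hp.2
  obtain ⟨t, rfl⟩ : ∃ t, s = t + 1 := ⟨s - 1, by omega⟩
  rw [propTrap_xiRow, sum_Icc_succ_top (by omega), ← add_assoc, Nat.add_sub_cancel,
    ← sum_add_distrib, ← key t (by omega),
    psize_eq_sum_range (N := Aseq p η μ t + N) fun i hi => hN i (by omega),
    psize_eq_sum_range (p := xiParts (t + 1) η μ p (t + 1)) (N := N), sum_range_add]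
  · simp only [xiParts_last h2, Nat.add_sub_cancel]
    push_cast
    simp only [add_assoc]
  · intro i hi
    rw [xiParts_last h2]
    exact hN _ (by omega)

end

/-! ### Shifts -/

section
variable {s : ℕ} {η η' : ℕ → ℤ} {k : ℤ}

theorem shiftSeq_zero_one : shiftSeq 0 k η 1 = η 1 + k := by simp [shiftSeq]

theorem shiftSeq_first (hs : 1 ≤ s) : shiftSeq s k η 1 = η 1 + 2 * k := by
  rw [shiftSeq, if_neg (by omega), if_pos rfl]

theorem shiftSeq_mid {j : ℕ} (hj : 2 ≤ j) (hjs : j ≤ s) : shiftSeq s k η j = η j + k := by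
  rw [shiftSeq, if_neg (by omega), if_neg (by omega), if_pos hjs]

theorem shiftSeq_last (hs : 1 ≤ s) : shiftSeq s k η (s + 1) = η (s + 1) := by
  rw [shiftSeq, if_neg (by omega), if_neg (by omega), if_neg (by omega)]

theorem shiftSeq_last' (hs : 2 ≤ s) : shiftSeq (s - 1) k η s = η s := by
  rw [shiftSeq, if_neg (by omega), if_neg (by omega), if_neg (by omega)]

theorem shiftSeq_neg (s : ℕ) (k : ℤ) (η : ℕ → ℤ) (j : ℕ) :
    shiftSeq s k (shiftSeq s (-k) η) j = η j := by
  unfold shiftSeq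
  split_ifs <;> first | contradiction | (subst_vars; ring)

theorem shiftSeq_neg' (s : ℕ) (k : ℤ) (η : ℕ → ℤ) (j : ℕ) :
    shiftSeq s (-k) (shiftSeq s k η) j = η j := by
  simpa using shiftSeq_neg s (-k) η j

theorem shiftSeq_congr {j : ℕ} (h : η j = η' j) : shiftSeq s k η j = shiftSeq s k η' j := by
  unfold shiftSeq
  split_ifs <;> subst_vars <;> simp [h]

theorem sum_shiftSeq (s : ℕ) (k : ℤ) (η : ℕ → ℤ) :
    ∑ i ∈ Icc 1 (s + 1), shiftSeq s k η i = ∑ i ∈ Icc 1 (s + 1), η i + (s + 1) * k := by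
  cases s with
  | zero => simp [shiftSeq_zero_one]
  | succ t =>
    have key : ∀ u, u ≤ t → ∑ i ∈ Icc 1 (u + 1), shiftSeq (t + 1) k η i =
        ∑ i ∈ Icc 1 (u + 1), η i + (u + 2) * k := by
      intro u
      induction u with
      | zero => intro _; simp [shiftSeq_first]
      | succ u ih =>
        intro hu
        rw [sum_Icc_succ_top (by omega), ih (by omega), shiftSeq_mid (by omega) (by omega),
          sum_Icc_succ_top (b := u + 1) (by omega)]
        push_cast
        ring
    rw [sum_Icc_succ_top (by omega), key t le_rfl, shiftSeq_last (by omega),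
      sum_Icc_succ_top (b := t + 1) (by omega)]
    push_cast
    ring

theorem propTrap_congr {ζ ζ' : ℕ → ℤ} (h : ∀ i, 1 ≤ i → i ≤ s + 1 → η i = ζ i)
    (h' : ∀ i, 1 ≤ i → i ≤ s → η' i = ζ' i) : propTrap s η η' = propTrap s ζ ζ' := by
  unfold propTrap
  refine sum_congr rfl fun i hi => sum_congr rfl fun j hj => ?_
  rw [mem_Icc] at hi hj
  rw [h i (by omega) (by omega), h (j + 1) (by omega) (by omega), h' i (by omega) (by omega),
    h' j (by omega) (by omega)]

theorem propTrap_shift (s : ℕ) (k : ℤ) (η η' : ℕ → ℤ) :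
    propTrap s (shiftSeq s k η) (shiftSeq (s - 1) k η') = propTrap s η η' := by
  unfold propTrap
  refine sum_congr rfl fun i hi => sum_congr rfl fun j hj => ?_
  rw [mem_Icc] at hi hj
  have h1 : shiftSeq s k η i - shiftSeq (s - 1) k η' i = η i - η' i := by
    rcases hi.1.eq_or_lt with rfl | h
    · rw [shiftSeq_first (by omega), shiftSeq_first (by omega)]; ring
    · rw [shiftSeq_mid (by omega) (by omega), shiftSeq_mid (by omega) (by omega)]; ring
  have h2 : shiftSeq (s - 1) k η' j - shiftSeq s k η (j + 1) = η' j - η (j + 1) := by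
    rcases hj.2.eq_or_lt with rfl | h
    · rw [shiftSeq_last (by omega), shiftSeq_last' (by omega)]
    · rw [shiftSeq_mid (by omega) (by omega), shiftSeq_mid (by omega) (by omega)]; ring
  rw [h1, h2]

theorem near_of_shift (hH : ∀ i, 1 ≤ i → i ≤ s → shiftSeq s k η (i + 1) ≤ shiftSeq s k η i) :
    ∀ i, 2 ≤ i → i + 1 ≤ s → η (i + 1) ≤ η i := by
  intro i hi his
  have := hH i (by omega) (by omega)
  rw [shiftSeq_mid (by omega) (by omega), shiftSeq_mid (by omega) (by omega)] at this
  omega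

/-! ### The shifted image of one step of `ξ` interlaces and is overlaid -/

/-- The two bounds `hfirst`, `hlast` on the largest part and on the number of parts of `p`
are what is needed for the outermost rectangles; the remaining ones fit without them. -/
theorem xi_shift {μ : ℤ} {p : ℕ → ℕ} (hs : 1 ≤ s) (hp : IsPartition p)
    (hH : ∀ i, 1 ≤ i → i ≤ s → shiftSeq s k η (i + 1) ≤ shiftSeq s k η i)
    (hfirst : (p 1 : ℤ) + μ ≤ η 1 + k)
    (hlast : ∀ m : ℕ, (m = 0 ∨ p m ≠ 0) → (m : ℤ) + η (s + 1) ≤ μ + k)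
    {i : ℕ} (hi : 1 ≤ i) (his : i ≤ s) :
    shiftSeq (s - 1) k (xiRow s η μ p) i ≤ shiftSeq s k η i ∧
    shiftSeq s k η (i + 1) ≤ shiftSeq (s - 1) k (xiRow s η μ p) i ∧
    FitsRect (xiParts s η μ p i)
      (shiftSeq s k η i - shiftSeq (s - 1) k (xiRow s η μ p) i)
      (shiftSeq (s - 1) k (xiRow s η μ p) i - shiftSeq s k η (i + 1)) := by
  have hη := near_of_shift hH
  obtain rfl | h2 := hs.eq_or_lt
  · obtain rfl : i = 1 := by omega
    have h0 := hlast 0 (Or.inl rfl)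
    rw [shiftSeq_first le_rfl, shiftSeq_last le_rfl, Nat.sub_self, shiftSeq_zero_one, xiRow_one]
    simp only [Nat.reduceAdd] at *
    refine ⟨by omega, by omega, fun m hm => ?_, fun m hm => ?_⟩
    · rw [xiParts_one]
      by_contra hne
      have := hlast m (Or.inr hne)
      omega
    · rw [xiParts_one]
      have := hp.le le_rfl hm
      omega
  obtain rfl | hi1 := hi.eq_or_lt
  · have hb := Bseq_nonneg (η := η) (μ := μ) hp (j := 1) le_rfl
    have hH1 := hH 1 le_rfl hs
    have hBdef : Bseq p η μ 1 = (Aseq p η μ 1 : ℤ) - (μ - η (1 + 1)) := rfl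
    rw [shiftSeq_first hs, shiftSeq_first (by omega), shiftSeq_mid (by omega) (by omega),
      xiRow_lt le_rfl h2, Nat.sub_self, Aseq_zero]
    rw [shiftSeq_first hs, shiftSeq_mid (by omega) (by omega)] at hH1
    have hE : η (1 + 1) + k ≤ η 1 - ((Aseq p η μ 1 : ℤ) - (0 : ℕ)) + 2 * k := by
      by_cases hA : Aseq p η μ 1 = 0
      · omega
      · have := Bseq_le_part (η := η) (μ := μ) hp (j := 1) (m := 1) le_rfl le_rfl (by omega)
        omega
    refine ⟨by omega, hE, fun m hm => ?_, fun m hm => ?_⟩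
    · rw [xiParts_lt le_rfl h2, if_neg]
      rw [Nat.sub_self, Aseq_zero]
      omega
    · rw [xiParts_lt le_rfl h2, Nat.sub_self, Aseq_zero]
      have := hp.le le_rfl hm
      split_ifs with hc
      · rw [zero_add]
        have := Bseq_le_part (η := η) (μ := μ) hp (j := 1) (m := m) le_rfl hm (by omega)
        omega
      · omega
  obtain rfl | hi2 := his.eq_or_lt
  · have hb := Bseq_nonneg (η := η) (μ := μ) hp (j := i - 1) (by omega)
    have hHs := hH i hi le_rfl
    have hBdef : Bseq p η μ (i - 1) = (Aseq p η μ (i - 1) : ℤ) - (μ - η i) := by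
      rw [Bseq, Nat.sub_add_cancel hi]
    rw [shiftSeq_mid (by omega) le_rfl, shiftSeq_last' (by omega), shiftSeq_last (by omega),
      xiRow_last (by omega)]
    rw [shiftSeq_mid (by omega) le_rfl, shiftSeq_last (by omega)] at hHs
    have hE : η (i + 1) + Bseq p η μ (i - 1) ≤ η i + k := by
      by_cases hA : Aseq p η μ (i - 1) = 0 ∨ p (Aseq p η μ (i - 1)) ≠ 0
      · have := hlast _ hA
        omega
      · rw [not_or, not_not] at hA
        have := Bseq_le_part (η := η) (μ := μ) hp (j := i - 1) (m := Aseq p η μ (i - 1))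
          (by omega) (by omega) le_rfl
        omega
    refine ⟨hE, by omega, fun m hm => ?_, fun m hm => ?_⟩
    · rw [xiParts_last (by omega)]
      by_contra hne
      have := hlast _ (Or.inr hne)
      push_cast at this
      omega
    · rw [xiParts_last (by omega)]
      have := part_le_Bseq (η := η) (μ := μ) hp (j := i - 1) (m := Aseq p η μ (i - 1) + m)
        (by omega) (by omega)
      omega
  · have hA := Aseq_mono (μ := μ) hp hη hi hi2
    have hB := Bseq_anti (μ := μ) hp hη hi1 hi2
    have hx := xiRow_sub_lt (η := η) (μ := μ) (p := p) hi1 hi2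
    have hy := xiRow_lt (η := η) (μ := μ) (p := p) hi hi2
    rw [shiftSeq_mid hi1 (by omega), shiftSeq_mid hi1 (by omega),
      shiftSeq_mid (by omega) (by omega)]
    refine ⟨by omega, by omega, fun m hm => ?_, fun m hm => ?_⟩
    · rw [xiParts_lt hi hi2, if_neg]
      omega
    · rw [xiParts_lt hi hi2]
      split_ifs with hc
      · have := part_le_Bseq (η := η) (μ := μ) hp (j := i - 1) (m := Aseq p η μ (i - 1) + m)
          (by omega) (by omega)
        have := Bseq_nonneg (η := η) (μ := μ) hp (j := i) (by omega)
        omega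
      · omega

/-! ### Injectivity and surjectivity of one step of `ξ` -/

theorem Aseq_congr {μ : ℤ} {p : ℕ → ℕ} {j : ℕ} (h : 1 ≤ j → η (j + 1) = η' (j + 1)) :
    Aseq p η μ j = Aseq p η' μ j := by
  unfold Aseq
  split_ifs
  · rfl
  · rw [h (by omega)]

theorem Bseq_congr {μ : ℤ} {p : ℕ → ℕ} {j : ℕ} (h : η (j + 1) = η' (j + 1)) :
    Bseq p η μ j = Bseq p η' μ j := by
  rw [Bseq, Bseq, Aseq_congr fun _ => h, h]

theorem xiRow_congr {μ : ℤ} {p : ℕ → ℕ} (h : ∀ i, 1 ≤ i → i ≤ s + 1 → η i = η' i) {j : ℕ}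
    (hj : 1 ≤ j) (hjs : j ≤ s) : xiRow s η μ p j = xiRow s η' μ p j := by
  by_cases hs : s = 1
  · obtain rfl : j = 1 := by omega
    subst hs
    rw [xiRow_one, xiRow_one, h 1 (by omega) (by omega), h 2 (by omega) (by omega)]
  obtain rfl | hlt := hjs.eq_or_lt
  · rw [xiRow_last (by omega), xiRow_last (by omega), h _ (by omega) (by omega),
      Bseq_congr (h _ (by omega) (by omega))]
  · rw [xiRow_lt hj hlt, xiRow_lt hj hlt, h _ (by omega) (by omega),
      Aseq_congr fun _ => h _ (by omega) (by omega),
      Aseq_congr (j := j - 1) fun _ => h _ (by omega) (by omega)]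

theorem xiParts_congr {μ : ℤ} {p : ℕ → ℕ} (h : ∀ i, 1 ≤ i → i ≤ s + 1 → η i = η' i) {j : ℕ}
    (hj : 1 ≤ j) (hjs : j ≤ s) (m : ℕ) : xiParts s η μ p j m = xiParts s η' μ p j m := by
  by_cases hs : s = 1
  · obtain rfl : j = 1 := by omega
    subst hs
    rw [xiParts_one, xiParts_one]
  obtain rfl | hlt := hjs.eq_or_lt
  · rw [xiParts_last (by omega), xiParts_last (by omega),
      Aseq_congr fun _ => h _ (by omega) (by omega)]
  · rw [xiParts_lt hj hlt, xiParts_lt hj hlt, Bseq_congr (h _ (by omega) (by omega)),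
      Aseq_congr fun _ => h _ (by omega) (by omega),
      Aseq_congr (j := j - 1) fun _ => h _ (by omega) (by omega)]

theorem xi_injective {μ : ℤ} {p q : ℕ → ℕ} (hs : 1 ≤ s) (hp : IsPartition p)
    (hq : IsPartition q)
    (hrow : ∀ i, 1 ≤ i → i ≤ s → xiRow s η μ p i = xiRow s η μ q i)
    (hparts : ∀ i, 1 ≤ i → i ≤ s → ∀ m, 1 ≤ m → xiParts s η μ p i m = xiParts s η μ q i m) :
    ∀ m, 1 ≤ m → p m = q m := by
  obtain rfl | h2 := hs.eq_or_lt
  · intro m hm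
    simpa only [xiParts_one] using hparts 1 le_rfl le_rfl m hm
  have hA : ∀ t, t < s → Aseq p η μ t = Aseq q η μ t := by
    intro t ht
    have h1 := sum_xiRow_lt (η := η) (μ := μ) (p := p) ht
    have h3 := sum_xiRow_lt (η := η) (μ := μ) (p := q) ht
    have h4 : ∑ i ∈ Icc 1 t, xiRow s η μ p i = ∑ i ∈ Icc 1 t, xiRow s η μ q i :=
      sum_congr rfl fun i hi => hrow i (mem_Icc.1 hi).1 (by have := (mem_Icc.1 hi).2; omega)
    omega
  have hB : ∀ t, t < s → Bseq p η μ t = Bseq q η μ t := by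
    intro t ht
    rw [Bseq, Bseq, hA t ht]
  have key : ∀ t, t < s → ∀ m, 1 ≤ m → m ≤ Aseq p η μ t → p m = q m := by
    intro t
    induction t with
    | zero => intro _ m _ hm; rw [Aseq_zero] at hm; omega
    | succ t ih =>
      intro ht m hm hmA
      by_cases hle : m ≤ Aseq p η μ t
      · exact ih (by omega) m hm hle
      have h := hparts (t + 1) (by omega) (by omega) (m - Aseq p η μ t) (by omega)
      rw [xiParts_lt (by omega) ht, xiParts_lt (by omega) ht, ← hA _ ht, ← hB _ ht,
        Nat.add_sub_cancel, ← hA t (by omega), if_pos (by omega), if_pos (by omega),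
        Nat.add_sub_cancel' (by omega)] at h
      have h3 := Bseq_le_part (η := η) (μ := μ) hp (j := t + 1) (by omega) hm hmA
      have h4 := Bseq_le_part (η := η) (μ := μ) hq (j := t + 1) (by omega) hm
        (by rw [← hA _ ht]; exact hmA)
      rw [← hB _ ht] at h4
      omega
  intro m hm
  by_cases hle : m ≤ Aseq p η μ (s - 1)
  · exact key (s - 1) (by omega) m hm hle
  · have h := hparts s hs le_rfl (m - Aseq p η μ (s - 1)) (by omega)
    rw [xiParts_last h2, xiParts_last h2, ← hA _ (by omega),
      Nat.add_sub_cancel' (by omega)] at h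
    exact h

/-- Gluing: given `η` and `η'` nearly interlacing it, with approximately overlaid partitions `Q`,
the partition `p` whose `t`-th block consists of the parts of `Q t` raised by `b_t` (and
`b_s = 0`) is a preimage under `ξ_η`. -/
theorem xi_surjective {μ : ℤ} {Q : ℕ → ℕ → ℕ} (hs : 1 ≤ s)
    (hQ : ∀ i, 1 ≤ i → i ≤ s → IsPartition (Q i))
    (hsum : ∑ i ∈ Icc 1 s, η' i = ∑ i ∈ Icc 1 (s + 1), η i - μ)
    (hup : ∀ i, 1 ≤ i → i < s → η' i ≤ η i)
    (hdown : ∀ i, 2 ≤ i → i ≤ s → η (i + 1) ≤ η' i)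
    (hlen : ∀ i, 1 ≤ i → i < s → ∀ m : ℕ, η i - η' i < m → Q i m = 0)
    (hpart : ∀ i, 2 ≤ i → i ≤ s → ∀ m : ℕ, 1 ≤ m → (Q i m : ℤ) ≤ η' i - η (i + 1)) :
    ∃ p, IsPartition p ∧ (∀ i, 1 ≤ i → i ≤ s → xiRow s η μ p i = η' i) ∧
      ∀ i, 1 ≤ i → i ≤ s → ∀ m, 1 ≤ m → xiParts s η μ p i m = Q i m := by
  obtain rfl | h2 := hs.eq_or_lt
  · refine ⟨Q 1, hQ 1 le_rfl le_rfl, fun i hi his => ?_, fun i hi his m _ => ?_⟩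
    · obtain rfl : i = 1 := by omega
      rw [xiRow_one]
      simp [sum_Icc_succ_top] at hsum
      omega
    · obtain rfl : i = 1 := by omega
      rw [xiParts_one]
  -- `α t` is the number of parts in the first `t` blocks
  obtain ⟨α, hα0, hα⟩ : ∃ α : ℕ → ℕ, α 0 = 0 ∧
      ∀ t, t < s → (α t : ℤ) = ∑ i ∈ Icc 1 t, (η i - η' i) := by
    refine ⟨fun t => (∑ i ∈ Icc 1 t, (η i - η' i)).toNat, by simp, fun t ht => ?_⟩
    apply Int.toNat_of_nonneg
    refine sum_nonneg fun i hi => ?_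
    rw [mem_Icc] at hi
    have := hup i hi.1 (by omega)
    omega
  have hαs : ∀ t, 1 ≤ t → t < s → (α t : ℤ) = α (t - 1) + (η t - η' t) := by
    intro t ht hts
    obtain ⟨u, rfl⟩ : ∃ u, t = u + 1 := ⟨t - 1, by omega⟩
    rw [hα _ hts, Nat.add_sub_cancel, hα _ (by omega), sum_Icc_succ_top (by omega)]
  have hαmono : ∀ t u, t ≤ u → u < s → α t ≤ α u := by
    intro t u htu
    induction u, htu using Nat.le_induction with
    | base => intro _; exact le_rfl
    | succ u hu ih =>
      intro hus
      have h1 := ih (by omega)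
      have h3 := hαs (u + 1) (by omega) hus
      have h4 := hup (u + 1) (by omega) hus
      rw [Nat.add_sub_cancel] at h3
      omega
  -- the level `b_t` of the `t`-th block
  obtain ⟨β, hβ, hβs⟩ : ∃ β : ℕ → ℤ, (∀ t, t < s → β t = α t - (μ - η (t + 1))) ∧ β s = 0 :=
    ⟨fun t => if t < s then α t - (μ - η (t + 1)) else 0, fun t ht => if_pos ht,
      if_neg (lt_irrefl s)⟩
  have hβstep : ∀ t, 2 ≤ t → t ≤ s → β (t - 1) - β t = η' t - η (t + 1) := by
    intro t ht hts
    obtain rfl | hlt := hts.eq_or_lt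
    · obtain ⟨u, rfl⟩ : ∃ u, t = u + 1 := ⟨t - 1, by omega⟩
      rw [hβs, hβ _ (by omega), Nat.add_sub_cancel, hα _ (by omega), sum_sub_distrib]
      rw [sum_Icc_succ_top (by omega), sum_Icc_succ_top (by omega),
        sum_Icc_succ_top (by omega)] at hsum
      omega
    · rw [hβ _ hlt, hβ _ (by omega), Nat.sub_add_cancel (by omega), hαs t (by omega) hlt]
      ring
  have hβanti : ∀ t u, 1 ≤ t → t ≤ u → u ≤ s → β u ≤ β t := by
    intro t u ht htu
    induction u, htu using Nat.le_induction with
    | base => intro _; exact le_rfl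
    | succ u hu ih =>
      intro hus
      have h1 := ih (by omega)
      have h3 := hβstep (u + 1) (by omega) hus
      have h4 := hdown (u + 1) (by omega) hus
      rw [Nat.add_sub_cancel] at h3
      omega
  have hβnn : ∀ t, 1 ≤ t → t ≤ s → 0 ≤ β t := fun t ht hts => hβs ▸ hβanti t s ht hts le_rfl
  -- `T m` is the block containing the `m`-th part
  have hex : ∀ m, 1 ≤ m → ∃ t, 1 ≤ t ∧ t ≤ s ∧ α (t - 1) < m ∧ (t < s → m ≤ α t) := by
    intro m hm
    have hex' : ∃ t, t = s ∨ m ≤ α t := ⟨s, Or.inl rfl⟩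
    classical
    have h1 := Nat.find_spec hex'
    have h3 : Nat.find hex' ≤ s := Nat.find_min' hex' (Or.inl rfl)
    have h4 : 1 ≤ Nat.find hex' := by
      by_contra hlt
      have h0 : Nat.find hex' = 0 := by omega
      rw [h0, hα0] at h1
      omega
    have h5 := Nat.find_min hex' (m := Nat.find hex' - 1) (by omega)
    exact ⟨Nat.find hex', h4, h3, by omega, by omega⟩
  choose! T hT1 hTs hTlo hThi using hex
  have hTeq : ∀ t m, 1 ≤ t → t ≤ s → α (t - 1) < m → (t < s → m ≤ α t) → T m = t := by
    intro t m ht hts hlo hhi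
    have hm : 1 ≤ m := by omega
    have k1 := hT1 m hm
    have k2 := hTs m hm
    have k3 := hTlo m hm
    have k4 := hThi m hm
    rcases lt_trichotomy (T m) t with h | h | h
    · have := hαmono (T m) (t - 1) (by omega) (by omega)
      omega
    · exact h
    · have := hαmono t (T m - 1) (by omega) (by omega)
      omega
  obtain ⟨p, hpdef⟩ : ∃ p : ℕ → ℕ, ∀ m, p m = Q (T m) (m - α (T m - 1)) + (β (T m)).toNat :=
    ⟨_, fun _ => rfl⟩
  have hplo : ∀ m, 1 ≤ m → β (T m) ≤ p m := by
    intro m hm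
    rw [hpdef]
    push_cast
    omega
  have hphi : ∀ m, 1 ≤ m → 2 ≤ T m → (p m : ℤ) ≤ β (T m - 1) := by
    intro m hm h
    have h1 := hpart (T m) h (hTs m hm) (m - α (T m - 1)) (by have := hTlo m hm; omega)
    have h3 := hβstep (T m) h (hTs m hm)
    have h4 := hβnn (T m) (hT1 m hm) (hTs m hm)
    rw [hpdef]
    push_cast
    omega
  have hp : IsPartition p := by
    refine ⟨fun m hm => ?_, ?_⟩
    · by_cases hc : T m < s → m + 1 ≤ α (T m)
      · have h1 := hTeq (T m) (m + 1) (hT1 m hm) (hTs m hm) (by have := hTlo m hm; omega) hc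
        rw [hpdef, hpdef, h1]
        have h3 := (hQ (T m) (hT1 m hm) (hTs m hm)).le (i := m - α (T m - 1))
          (j := m + 1 - α (T m - 1)) (by have := hTlo m hm; omega) (by omega)
        omega
      · have h0 : T m < T (m + 1) := by
          by_contra hle
          have := hThi (m + 1) (by omega)
          have := hαmono (T (m + 1)) (T m) (by omega) (by omega)
          omega
        have h1 := hT1 m hm
        have h3 := hphi (m + 1) (by omega) (by omega)
        have h4 := hβanti (T m) (T (m + 1) - 1) h1 (by omega)
          (by have := hTs (m + 1) (by omega); omega)
        have h5 := hplo m hm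
        omega
    · obtain ⟨N, hN⟩ := (hQ s hs le_rfl).2
      refine ⟨N + α (s - 1) + 1, fun m hm => ?_⟩
      rw [hpdef, hTeq s m hs le_rfl (by omega) (by omega), hβs, hN _ (by omega)]
      rfl
  have hA : ∀ t, t < s → Aseq p η μ t = α t := by
    intro t ht
    by_cases h0 : t = 0
    · rw [h0, Aseq_zero, hα0]
    rw [Aseq_pos _ _ _ (by omega)]
    have hb := hβ t ht
    apply aOf_eq hp
    · by_cases hz : α t = 0
      · exact Or.inl hz
      right
      have h1 := hplo (α t) (by omega)
      have h3 : T (α t) ≤ t := by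
        by_contra hlt
        have := hTlo (α t) (by omega)
        have := hαmono t (T (α t) - 1) (by omega) (by have := hTs (α t) (by omega); omega)
        omega
      have := hβanti (T (α t)) t (hT1 _ (by omega)) h3 (by omega)
      omega
    · have h3 : t < T (α t + 1) := by
        by_contra hlt
        have := hThi (α t + 1) (by omega)
        have := hαmono (T (α t + 1)) t (by omega) ht
        omega
      have h1 := hphi (α t + 1) (by omega) (by omega)
      have := hβanti t (T (α t + 1) - 1) (by omega) (by omega)
        (by have := hTs (α t + 1) (by omega); omega)
      omega
  have hB : ∀ t, t < s → Bseq p η μ t = β t := by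
    intro t ht
    rw [Bseq, hA t ht, hβ t ht]
  refine ⟨p, hp, fun i hi his => ?_, fun i hi his m hm => ?_⟩
  · obtain rfl | hlt := his.eq_or_lt
    · rw [xiRow_last h2, hB _ (by omega)]
      have := hβstep i h2 le_rfl
      omega
    · rw [xiRow_lt hi hlt, hA _ hlt, hA _ (by omega), hαs i hi hlt]
      ring
  · obtain rfl | hlt := his.eq_or_lt
    · rw [xiParts_last h2, hA _ (by omega), hpdef,
        hTeq i _ hi le_rfl (by omega) (by omega), hβs, Nat.add_sub_cancel_left]
      rfl
    · have hαi := hαs i hi hlt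
      rw [xiParts_lt hi hlt, hA _ hlt, hA _ (by omega), hB _ hlt]
      split_ifs with hc
      · rw [hpdef, hTeq i _ hi his (by omega) (by omega), Nat.add_sub_cancel_left,
          Nat.add_sub_cancel]
      · exact (hlen i hi hlt m (by omega)).symm

end

/-! ### Majorization up to a defect -/

/-- `x` majorizes `y` up to a defect `e`: the sums over `1, …, n` agree and every sum of `m` of
the `y_i` is at most `x_1 + ⋯ + x_m + e`. The entries of `x` are taken in the given order. -/
def NearMaj (n : ℕ) (x y : ℕ → ℤ) (e : ℤ) : Prop :=
  ∑ i ∈ Icc 1 n, x i = ∑ i ∈ Icc 1 n, y i ∧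
  ∀ B ⊆ Icc 1 n, ∑ i ∈ B, y i ≤ ∑ i ∈ Icc 1 #B, x i + e

theorem sum_subset_le {x : ℕ → ℤ} (n : ℕ) (hx : ∀ i, 1 ≤ i → i < n → x (i + 1) ≤ x i)
    (A : Finset ℕ) (hA : A ⊆ Icc 1 n) : ∑ i ∈ A, x i ≤ ∑ i ∈ Icc 1 #A, x i := by
  induction n generalizing A with
  | zero =>
    obtain rfl : A = ∅ := by simpa using hA
    simp
  | succ n ih =>
    have hx' : ∀ i, 1 ≤ i → i < n → x (i + 1) ≤ x i := fun i h1 h2 => hx i h1 (by omega)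
    have hsub : A.erase (n + 1) ⊆ Icc 1 n := by
      intro i hi
      rw [mem_erase] at hi
      have := mem_Icc.1 (hA hi.2)
      rw [mem_Icc]
      omega
    have h1 := ih hx' _ hsub
    by_cases hmem : n + 1 ∈ A
    · rw [← add_sum_erase A x hmem, ← card_erase_add_one hmem, sum_Icc_succ_top (by omega)]
      have hc : #(A.erase (n + 1)) ≤ n := by simpa using card_le_card hsub
      have hanti : ∀ m, 1 ≤ m → m ≤ n + 1 → x (n + 1) ≤ x m := by
        intro m hm hmn
        induction hmn using Nat.decreasingInduction with
        | self => exact le_rfl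
        | of_succ m hmn ih => exact (ih (by omega)).trans (hx m hm (by omega))
      have := hanti (#(A.erase (n + 1)) + 1) (by omega) (by omega)
      omega
    · rwa [erase_eq_of_notMem hmem] at h1

section
variable {s : ℕ} {η μ : ℕ → ℤ} {p : ℕ → ℕ} {e : ℤ}

theorem NearMaj.defect_nonneg (h : NearMaj s η μ e) : 0 ≤ e := by
  simpa using h.2 ∅ (empty_subset _)

/-- One step of `ξ` increases the defect by at most the size of the partition. -/
theorem NearMaj.xi (hs : 1 ≤ s) (hp : IsPartition p) (h : NearMaj (s + 1) η μ e) :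
    NearMaj s (xiRow s η (μ (s + 1)) p) μ (e + psize p) := by
  have he := h.defect_nonneg
  have hsum : ∑ i ∈ Icc 1 s, xiRow s η (μ (s + 1)) p i = ∑ i ∈ Icc 1 s, μ i := by
    have := h.1
    rw [sum_Icc_succ_top (f := μ) (by omega)] at this
    rw [sum_xiRow hs]
    omega
  refine ⟨hsum, fun B hB => ?_⟩
  have hcard : #B ≤ s := by simpa using card_le_card hB
  obtain hc | hc := hcard.eq_or_lt
  · have hBe : B = Icc 1 s := eq_of_subset_of_card_le hB (by simp [hc])
    rw [hc, hsum, hBe]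
    omega
  · rw [sum_xiRow_lt hc]
    by_cases h0 : #B = 0
    · rw [card_eq_zero] at h0
      subst h0
      simp [Aseq_zero]
      omega
    rw [Aseq_pos _ _ _ (by omega)]
    have h1 := h.2 B (hB.trans (Icc_subset_Icc le_rfl (by omega)))
    have hn : s + 1 ∉ B := fun hmem => by
      have := mem_Icc.1 (hB hmem)
      omega
    have h2 := h.2 (insert (s + 1) B) (by
      refine insert_subset (by simp) (hB.trans (Icc_subset_Icc le_rfl (by omega))))
    rw [sum_insert hn, card_insert_of_notMem hn, sum_Icc_succ_top (by omega)] at h2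
    have h3 := aOf_le_size hp (μ (s + 1) - η (#B + 1))
    omega

theorem NearMaj.first_bound (h : NearMaj (s + 1) η μ e) (hp : IsPartition p) {k : ℤ}
    (hk : e + psize p ≤ k) : (p 1 : ℤ) + μ (s + 1) ≤ η 1 + k := by
  have h1 := h.2 {s + 1} (by simp)
  have h2 := mul_le_psize hp le_rfl
  simp at h1
  omega

theorem NearMaj.last_bound (h : NearMaj (s + 1) η μ e) (hp : IsPartition p) {k : ℤ}
    (hk : e + psize p ≤ k) (m : ℕ) (hm : m = 0 ∨ p m ≠ 0) :
    (m : ℤ) + η (s + 1) ≤ μ (s + 1) + k := by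
  have h1 := h.2 (Icc 1 s) (Icc_subset_Icc le_rfl (by omega))
  have h2 := h.1
  rw [sum_Icc_succ_top (by omega), sum_Icc_succ_top (by omega)] at h2
  rw [Nat.card_Icc, Nat.add_sub_cancel] at h1
  have h3 : m ≤ psize p := by
    by_cases h0 : m = 0
    · omega
    · have h4 := mul_le_psize hp (m := m) (by omega)
      have h5 : 1 ≤ p m := by omega
      nlinarith
  omega

end

/-! ### Iterating `ξ` -/

section
variable {r : ℕ} {lam μ : ℕ → ℤ} {π : ℕ → ℕ → ℕ}

theorem sum_Icc_bot (f : ℕ → ℕ) {j r : ℕ} (h : j ≤ r) :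
    ∑ i ∈ Icc j r, f i = f j + ∑ i ∈ Icc (j + 1) r, f i := by
  rw [← add_sum_Ioc_eq_sum_Icc h]
  congr 2
  ext i
  simp only [mem_Ioc, mem_Icc]
  omega

theorem phiRow_top : phiRow r lam μ π (r + 1) = lam := by
  simp [phiRow, phiGo]

theorem phiRow_step {j : ℕ} (hjr : j ≤ r) : phiRow r lam μ π j =
    xiRow j (phiRow r lam μ π (j + 1)) (μ (j + 1)) (π j) := by
  obtain ⟨m, rfl⟩ : ∃ m, r = j + m := ⟨r - j, by omega⟩
  unfold phiRow
  rw [show j + m + 1 - j = m + 1 by omega, show j + m + 1 - (j + 1) = m by omega, phiGo,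
    show j + m - m = j by omega, show j + m + 1 - m = j + 1 by omega]

/-- If row `j + 1` becomes non-increasing after the shift and majorizes `μ` up to the number of
boxes already used, then the shifted row `j` interlaces it and the overlays fit. -/
theorem phi_step {k : ℤ} {j : ℕ} (hj : 1 ≤ j) (hjr : j ≤ r) (hp : IsPartition (π j))
    (hk : ((∑ i ∈ Icc j r, psize (π i) : ℕ) : ℤ) ≤ k)
    (hH : ∀ i, 1 ≤ i → i ≤ j → shiftSeq j k (phiRow r lam μ π (j + 1)) (i + 1) ≤
      shiftSeq j k (phiRow r lam μ π (j + 1)) i)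
    (hmaj : NearMaj (j + 1) (phiRow r lam μ π (j + 1)) μ
      (∑ i ∈ Icc (j + 1) r, psize (π i) : ℕ)) {i : ℕ} (hi : 1 ≤ i) (hij : i ≤ j) :
    shiftSeq (j - 1) k (phiRow r lam μ π j) i ≤ shiftSeq j k (phiRow r lam μ π (j + 1)) i ∧
    shiftSeq j k (phiRow r lam μ π (j + 1)) (i + 1) ≤
      shiftSeq (j - 1) k (phiRow r lam μ π j) i ∧
    FitsRect (phiParts r lam μ π j i)
      (shiftSeq j k (phiRow r lam μ π (j + 1)) i - shiftSeq (j - 1) k (phiRow r lam μ π j) i)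
      (shiftSeq (j - 1) k (phiRow r lam μ π j) i -
        shiftSeq j k (phiRow r lam μ π (j + 1)) (i + 1)) := by
  have hk' : ((∑ i ∈ Icc (j + 1) r, psize (π i) : ℕ) : ℤ) + psize (π j) ≤ k := by
    rw [sum_Icc_bot _ hjr] at hk
    push_cast at *
    omega
  rw [phiRow_step (j := j) hjr]
  exact xi_shift hj hp hH (hmaj.first_bound hp hk') (hmaj.last_bound hp hk') hi hij

/-- The invariant carried from the top row down: after the shift row `n + 1` is non-increasing,
and before it the row majorizes `μ` up to the number of boxes in `π^{n+1}, …, π^r`. -/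
theorem phi_inv {k : ℤ} (hlam : ∀ i, 1 ≤ i → i ≤ r → lam (i + 1) ≤ lam i)
    (hmaj : MajZ (r + 1) lam μ) (hπ : ∀ j, 1 ≤ j → j ≤ r → IsPartition (π j))
    (hk : ((∑ i ∈ Icc 1 r, psize (π i) : ℕ) : ℤ) ≤ k) {n : ℕ} (hn : n ≤ r) :
    (∀ i, 1 ≤ i → i ≤ n → shiftSeq n k (phiRow r lam μ π (n + 1)) (i + 1) ≤
      shiftSeq n k (phiRow r lam μ π (n + 1)) i) ∧
    NearMaj (n + 1) (phiRow r lam μ π (n + 1)) μ (∑ i ∈ Icc (n + 1) r, psize (π i) : ℕ) := by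
  induction hn using Nat.decreasingInduction with
  | self =>
    rw [phiRow_top]
    refine ⟨fun i hi hir => ?_, hmaj.2, fun B hB => ?_⟩
    · have h1 := hlam i hi hir
      have h0 : 0 ≤ k := le_trans (by positivity) hk
      unfold shiftSeq
      split_ifs <;> subst_vars <;> omega
    · obtain ⟨A, hA, hc, hle⟩ := hmaj.1 B hB
      have := sum_subset_le (r + 1) (fun i h1 h2 => hlam i h1 (by omega)) A hA
      rw [hc] at this
      simp
      omega
  | of_succ n hn ih =>
    obtain ⟨ih1, ih2⟩ := ih
    have hp := hπ (n + 1) (by omega) hn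
    have hk' : ((∑ i ∈ Icc (n + 1) r, psize (π i) : ℕ) : ℤ) ≤ k := by
      refine le_trans ?_ hk
      exact_mod_cast sum_le_sum_of_subset (Icc_subset_Icc (by omega) le_rfl)
    constructor
    · intro i hi hin
      have h1 := phi_step (j := n + 1) (by omega) hn hp hk' ih1 ih2 hi (by omega)
      have h2 := phi_step (j := n + 1) (by omega) hn hp hk' ih1 ih2 (i := i + 1) (by omega) (by omega)
      rw [Nat.add_sub_cancel] at h1 h2
      exact h2.1.trans h1.2.1
    · have h := ih2.xi (by omega) hp
      rw [← phiRow_step hn] at h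
      convert h using 1
      rw [sum_Icc_bot _ (show n + 1 ≤ r from hn)]
      push_cast
      exact add_comm _ _

/-- The box count: the total number of boxes of the `π^j` is the proper trapezoidal area plus
the number of overlay boxes. -/
theorem sum_psize_phi (hπ : ∀ j, 1 ≤ j → j ≤ r → IsPartition (π j))
    (hη : ∀ j, 1 ≤ j → j ≤ r → ∀ i, 2 ≤ i → i + 1 ≤ j →
      phiRow r lam μ π (j + 1) (i + 1) ≤ phiRow r lam μ π (j + 1) i) :
    ((∑ j ∈ Icc 1 r, psize (π j) : ℕ) : ℤ) = patPropTrap r (phiRow r lam μ π) +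
      ∑ j ∈ Icc 1 r, ∑ i ∈ Icc 1 j, (psize (phiParts r lam μ π j i) : ℤ) := by
  have h0 : patPropTrap r (phiRow r lam μ π) =
      ∑ j ∈ Icc 1 r, propTrap j (phiRow r lam μ π (j + 1)) (phiRow r lam μ π j) := by
    unfold patPropTrap
    apply sum_subset (Icc_subset_Icc (by omega) le_rfl)
    intro j hj hj'
    rw [mem_Icc] at hj hj'
    obtain rfl : j = 1 := by omega
    simp [propTrap]
  rw [h0, ← sum_add_distrib]
  push_cast
  refine sum_congr rfl fun j hj => ?_
  rw [mem_Icc] at hj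
  rw [phiRow_step (j := j) hj.2]
  exact psize_xi hj.1 (hπ j hj.1 hj.2) (hη j hj.1 hj.2)

end

theorem patPropTrap_shift {r : ℕ} {k : ℤ} {L R : ℕ → ℕ → ℤ}
    (h : ∀ j, 1 ≤ j → j ≤ r + 1 → ∀ i, 1 ≤ i → i ≤ j → shiftSeq (j - 1) k (R j) i = L j i) :
    patPropTrap r L = patPropTrap r R := by
  refine sum_congr rfl fun j hj => ?_
  rw [mem_Icc] at hj
  rw [← propTrap_shift j k (R (j + 1)) (R j)]
  exact propTrap_congr (fun i h1 h2 => (h (j + 1) (by omega) (by omega) i h1 h2).symm)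
    fun i h1 h2 => (h j (by omega) (by omega) i h1 h2).symm

theorem phi_inTarget {r d : ℕ} {lam μ : ℕ → ℤ}
    (hlam : ∀ i, 1 ≤ i → i ≤ r → lam (i + 1) ≤ lam i)
    (hmaj : MajZ (r + 1) lam μ) {k : ℤ} (hk : (d : ℤ) ≤ k)
    {π : ℕ → ℕ → ℕ} (hπ : ∀ j, 1 ≤ j → j ≤ r → IsPartition (π j))
    (hd : (∑ j ∈ Finset.Icc 1 r, psize (π j)) = d) :
    InTarget r d k lam μ (fun j => shiftSeq (j - 1) k (phiRow r lam μ π j))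
      (phiParts r lam μ π) := by
  subst hd
  have hinv := fun {n} hn => phi_inv (n := n) hlam hmaj hπ hk hn
  have hstep : ∀ j, 1 ≤ j → j ≤ r → ∀ i, 1 ≤ i → i ≤ j → _ := fun j hj hjr i hi hij =>
    phi_step hj hjr (hπ j hj hjr)
      (le_trans (by exact_mod_cast sum_le_sum_of_subset (Icc_subset_Icc hj le_rfl)) hk)
      (hinv hjr).1 (hinv hjr).2 hi hij
  have hrow : ∀ n, n ≤ r → ∑ i ∈ Icc 1 (n + 1), shiftSeq n k (phiRow r lam μ π (n + 1)) i =
      ∑ i ∈ Icc 1 (n + 1), μ i + (n + 1) * k := by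
    intro n hn
    rw [sum_shiftSeq, (hinv hn).2.1]
  refine ⟨⟨⟨fun j hj hjr i hi hij => ?_, fun j hj hjr i hi hij => ?_⟩,
    fun j i hi hij hjr => ⟨?_, ?_⟩⟩, fun i hi hir => ?_, fun j hj hjr => ?_, ?_⟩
  · obtain ⟨n, rfl⟩ : ∃ n, j = n + 1 := ⟨j - 1, by omega⟩
    exact (hinv (n := n) (by omega)).1 i hi (by omega)
  · exact ⟨(hstep j hj (by omega) i hi hij).1, (hstep j hj (by omega) i hi hij).2.1⟩
  · exact isPartition_xiParts (hπ j (by omega) hjr) hi hij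
  · exact (hstep j (by omega) hjr i hi hij).2.2
  · simp only [phiRow_top, Nat.add_sub_cancel]
  · obtain ⟨n, rfl⟩ : ∃ n, j = n + 1 := ⟨j - 1, by omega⟩
    simp only [rowSumZ, Nat.add_sub_cancel]
    rw [hrow n (by omega)]
    cases n with
    | zero => simp
    | succ n =>
      simp only [Nat.add_sub_cancel]
      rw [hrow n (by omega), sum_Icc_succ_top (by omega)]
      push_cast
      ring
  · rw [patPropTrap_shift (R := phiRow r lam μ π) fun _ _ _ _ _ _ => rfl]
    exact (sum_psize_phi hπ fun j hj hjr => near_of_shift (hinv hjr).1).symm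

theorem phi_injective {r : ℕ} {lam μ : ℕ → ℤ} {k : ℤ} {π π' : ℕ → ℕ → ℕ}
    (hπ : ∀ j, 1 ≤ j → j ≤ r → IsPartition (π j))
    (hπ' : ∀ j, 1 ≤ j → j ≤ r → IsPartition (π' j))
    (hrow : ∀ j, 1 ≤ j → j ≤ r + 1 → ∀ i, 1 ≤ i → i ≤ j →
      shiftSeq (j - 1) k (phiRow r lam μ π j) i = shiftSeq (j - 1) k (phiRow r lam μ π' j) i)
    (hparts : ∀ j, 1 ≤ j → j ≤ r → ∀ i, 1 ≤ i → i ≤ j → ∀ m, 1 ≤ m →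
      phiParts r lam μ π j i m = phiParts r lam μ π' j i m) :
    ∀ j, 1 ≤ j → j ≤ r → ∀ m, 1 ≤ m → π j m = π' j m := by
  have hrow' : ∀ j, 1 ≤ j → j ≤ r + 1 → ∀ i, 1 ≤ i → i ≤ j →
      phiRow r lam μ π j i = phiRow r lam μ π' j i := by
    intro j hj hjr i hi hij
    rw [← shiftSeq_neg' (j - 1) k (phiRow r lam μ π j),
      ← shiftSeq_neg' (j - 1) k (phiRow r lam μ π' j)]
    exact shiftSeq_congr (hrow j hj hjr i hi hij)
  intro j hj hjr
  have hη := hrow' (j + 1) (by omega) (by omega)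
  apply xi_injective (η := phiRow r lam μ π (j + 1)) (μ := μ (j + 1)) hj (hπ j hj hjr)
    (hπ' j hj hjr)
  · intro i hi hij
    have h := hrow' j hj (by omega) i hi hij
    rwa [phiRow_step hjr, phiRow_step hjr, ← xiRow_congr hη hi hij] at h
  · intro i hi hij m hm
    have h := hparts j hj hjr i hi hij m hm
    rwa [phiParts, phiParts, ← xiParts_congr hη hi hij] at h

theorem phi_surjective {r d : ℕ} {lam μ : ℕ → ℤ} {k : ℤ} {L : ℕ → ℕ → ℤ}
    {Q : ℕ → ℕ → ℕ → ℕ} (h : InTarget r d k lam μ L Q) :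
    ∃ π : ℕ → ℕ → ℕ, (∀ j, 1 ≤ j → j ≤ r → IsPartition (π j)) ∧
      (∑ j ∈ Finset.Icc 1 r, psize (π j)) = d ∧
      (∀ j, 1 ≤ j → j ≤ r + 1 → ∀ i, 1 ≤ i → i ≤ j →
        shiftSeq (j - 1) k (phiRow r lam μ π j) i = L j i) ∧
      (∀ j, 1 ≤ j → j ≤ r → ∀ i, 1 ≤ i → i ≤ j → ∀ m, 1 ≤ m →
        phiParts r lam μ π j i m = Q j i m) := by
  obtain ⟨⟨⟨hL1, hL2⟩, hQ⟩, htop, hwt, hbox⟩ := h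
  -- `U` is the pattern `L` with the shift undone
  obtain ⟨U, hU⟩ : ∃ U : ℕ → ℕ → ℤ, ∀ n, U n = shiftSeq (n - 1) (-k) (L n) := ⟨_, fun _ => rfl⟩
  have hLU : ∀ n i, shiftSeq (n - 1) k (U n) i = L n i := by
    intro n i
    rw [hU, shiftSeq_neg]
  have hUsum : ∀ n, ∑ i ∈ Icc 1 n, U n i = rowSumZ L n - n * k := by
    intro n
    cases n with
    | zero => simp [rowSumZ]
    | succ n =>
      rw [hU, Nat.add_sub_cancel, sum_shiftSeq, rowSumZ]
      push_cast
      ring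
  -- undoing the shift does not affect these two differences, so the overlay bounds persist
  have hd1 : ∀ j i, 1 ≤ i → i < j → U (j + 1) i - U j i = L (j + 1) i - L j i := by
    intro j i hi hij
    rw [hU, hU, Nat.add_sub_cancel]
    rcases hi.eq_or_lt with rfl | h
    · rw [shiftSeq_first (by omega), shiftSeq_first (by omega)]; ring
    · rw [shiftSeq_mid (by omega) (by omega), shiftSeq_mid (by omega) (by omega)]; ring
  have hd2 : ∀ j i, 2 ≤ i → i ≤ j → U j i - U (j + 1) (i + 1) = L j i - L (j + 1) (i + 1) := by
    intro j i hi hij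
    rw [hU, hU, Nat.add_sub_cancel]
    rcases hij.eq_or_lt with rfl | h
    · rw [shiftSeq_last (by omega), shiftSeq_last' (by omega)]
    · rw [shiftSeq_mid (by omega) (by omega), shiftSeq_mid (by omega) (by omega)]; ring
  have hex : ∀ j, 1 ≤ j → j ≤ r → ∃ p, IsPartition p ∧
      (∀ i, 1 ≤ i → i ≤ j → xiRow j (U (j + 1)) (μ (j + 1)) p i = U j i) ∧
      ∀ i, 1 ≤ i → i ≤ j → ∀ m, 1 ≤ m → xiParts j (U (j + 1)) (μ (j + 1)) p i m = Q j i m := by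
    intro j hj hjr
    apply xi_surjective hj
    · exact fun i hi hij => (hQ j i hi hij hjr).1
    · have := hwt (j + 1) (by omega) (by omega)
      simp only [Nat.add_sub_cancel] at this
      rw [hUsum, hUsum]
      push_cast
      linarith
    · intro i hi hij
      have := hd1 j i hi hij
      have := hL2 j hj (by omega) i hi hij.le
      omega
    · intro i hi hij
      have := hd2 j i hi hij
      have := hL2 j hj (by omega) i (by omega) hij
      omega
    · intro i hi hij m hm
      rw [hd1 j i hi hij] at hm
      exact (hQ j i hi hij.le hjr).2.1 m hm
    · intro i hi hij m hm
      rw [hd2 j i hi hij]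
      exact (hQ j i (by omega) hij hjr).2.2 m hm
  choose! π hπ hπrow hπparts using hex
  have hrow : ∀ n, n ≤ r → ∀ i, 1 ≤ i → i ≤ n + 1 →
      phiRow r lam μ π (n + 1) i = U (n + 1) i := by
    intro n hn
    induction hn using Nat.decreasingInduction with
    | self =>
      intro i hi hir
      rw [phiRow_top, hU, shiftSeq_congr (htop i hi hir), Nat.add_sub_cancel, shiftSeq_neg']
    | of_succ n hn ih =>
      intro i hi hin
      rw [phiRow_step hn, xiRow_congr ih hi hin]
      exact hπrow (n + 1) (by omega) hn i hi hin
  have hrowL : ∀ j, 1 ≤ j → j ≤ r + 1 → ∀ i, 1 ≤ i → i ≤ j →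
      shiftSeq (j - 1) k (phiRow r lam μ π j) i = L j i := by
    intro j hj hjr i hi hij
    obtain ⟨n, rfl⟩ : ∃ n, j = n + 1 := ⟨j - 1, by omega⟩
    rw [shiftSeq_congr (hrow n (by omega) i hi hij), hLU]
  have hpartsQ : ∀ j, 1 ≤ j → j ≤ r → ∀ i, 1 ≤ i → i ≤ j → ∀ m, 1 ≤ m →
      phiParts r lam μ π j i m = Q j i m := by
    intro j hj hjr i hi hij m hm
    rw [phiParts, xiParts_congr (hrow j hjr) hi hij]
    exact hπparts j hj hjr i hi hij m hm
  refine ⟨π, hπ, ?_, hrowL, hpartsQ⟩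
  have hsize := sum_psize_phi (lam := lam) (μ := μ) hπ fun j hj hjr =>
    near_of_shift (k := k) fun i hi hij => by
      have h1 := hrowL (j + 1) (by omega) (by omega) i hi (by omega)
      have h2 := hrowL (j + 1) (by omega) (by omega) (i + 1) (by omega) (by omega)
      rw [Nat.add_sub_cancel] at h1 h2
      rw [h1, h2]
      exact hL1 (j + 1) (by omega) (by omega) i hi (by omega)
  have hparts : ∑ j ∈ Icc 1 r, ∑ i ∈ Icc 1 j, (psize (phiParts r lam μ π j i) : ℤ) =
      ∑ j ∈ Icc 1 r, ∑ i ∈ Icc 1 j, (psize (Q j i) : ℤ) := by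
    refine sum_congr rfl fun j hj => sum_congr rfl fun i hi => ?_
    rw [mem_Icc] at hi hj
    rw [psize_congr (hpartsQ j hj.1 hj.2 i hi.1 hi.2)]
  rw [← patPropTrap_shift hrowL, hparts, hbox] at hsize
  exact_mod_cast hsize

/-- For `k ≥ d`, shifting by `k` after `φ` is a bijection from
`r`-colored partitions of `d` onto the POPs with bounding sequence the shift by `k` of
`lam`, weight `(μ_1 + k, …, μ_{r+1} + k)`, and `□^prop + (number of boxes) = d`. -/
theorem stmt19 (r d : ℕ) (hr : 1 ≤ r) (lam μ : ℕ → ℤ)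
    (hlam : ∀ i, 1 ≤ i → i ≤ r → lam (i + 1) ≤ lam i)
    (hmaj : MajZ (r + 1) lam μ)
    (k : ℤ) (hk : (d : ℤ) ≤ k) :
    (∀ π : ℕ → ℕ → ℕ, (∀ j, 1 ≤ j → j ≤ r → IsPartition (π j)) →
        (∑ j ∈ Finset.Icc 1 r, psize (π j)) = d →
        InTarget r d k lam μ (fun j => shiftSeq (j - 1) k (phiRow r lam μ π j))
          (phiParts r lam μ π)) ∧
    (∀ π π' : ℕ → ℕ → ℕ,
        (∀ j, 1 ≤ j → j ≤ r → IsPartition (π j)) →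
        (∑ j ∈ Finset.Icc 1 r, psize (π j)) = d →
        (∀ j, 1 ≤ j → j ≤ r → IsPartition (π' j)) →
        (∑ j ∈ Finset.Icc 1 r, psize (π' j)) = d →
        (∀ j, 1 ≤ j → j ≤ r + 1 → ∀ i, 1 ≤ i → i ≤ j →
          shiftSeq (j - 1) k (phiRow r lam μ π j) i =
            shiftSeq (j - 1) k (phiRow r lam μ π' j) i) →
        (∀ j, 1 ≤ j → j ≤ r → ∀ i, 1 ≤ i → i ≤ j → ∀ m, 1 ≤ m →
          phiParts r lam μ π j i m = phiParts r lam μ π' j i m) →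
        ∀ j, 1 ≤ j → j ≤ r → ∀ m, 1 ≤ m → π j m = π' j m) ∧
    (∀ (L : ℕ → ℕ → ℤ) (Q : ℕ → ℕ → ℕ → ℕ), InTarget r d k lam μ L Q →
        ∃ π : ℕ → ℕ → ℕ, (∀ j, 1 ≤ j → j ≤ r → IsPartition (π j)) ∧
          (∑ j ∈ Finset.Icc 1 r, psize (π j)) = d ∧
          (∀ j, 1 ≤ j → j ≤ r + 1 → ∀ i, 1 ≤ i → i ≤ j →
            shiftSeq (j - 1) k (phiRow r lam μ π j) i = L j i) ∧
          (∀ j, 1 ≤ j → j ≤ r → ∀ i, 1 ≤ i → i ≤ j → ∀ m, 1 ≤ m →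
            phiParts r lam μ π j i m = Q j i m)) := by
  exact ⟨fun π hπ hd => phi_inTarget hlam hmaj hk hπ hd,
    fun π π' hπ _ hπ' _ hrow hparts => phi_injective hπ hπ' hrow hparts,
    fun L Q h => phi_surjective h⟩
end
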